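/- arXiv:0805.2047 — 5 statements merged into one kernel-verified Lean document; each statement's English description precedes it below -/
import Mathlib

section
/- Let 1 < q < r be real numbers with ⌈q⌉ = ⌈r⌉ and suppose (q, r] ∩ closure(U) = ∅. Then [q, r) ∩ V is a finite set {r_1, ..., r_m} contained in V ∖ U, and U_r' = U_q' ∪ ⋃_{ℓ=1}^{m} ( V_{r_ℓ}' ∖ U_{r_ℓ}' ). -/
/-!
Fix the top digit `M = ⌈q⌉ - 1`. The map `t ↦ α(t)` is strictly increasing for the lexicographic
order on the bases with top digit `M` (`alpha_mono`), and its values are exactly the infinite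
sequences that start with `M` and dominate all their shifts (`exists_base`). A sequence is univoque
in base `t` iff its tails after digits `< M`, and its reflected tails after digits `> 0`, are all
`< α(t)` (`useq_iff`). Hence `𝒰_t'` increases with `t`, and `𝒱_t' ⊆ 𝒰_r'` for `t < r`
(`vseq_subset_useq`), which is the easy inclusion.

Two approximation results link these sequences to `𝒰`. Cutting a sequence after a suitable prefix
`u` (`exists_good_length`) and continuing it as `u (ū⁺)^∞` gives expansions of `1` in bases of `𝒰`
(`gam_univoque`). Consequently, if `t ∈ 𝒱` is outside the closure of `𝒰`, some reflected shift
of `α(t)` equals `α(t)` (`exists_refl_eq`), and every non-integer base in `𝒰` is a limit from the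
right of elements of `𝒰` (`exists_univ_right`). The latter gives `[q, r) ∩ 𝒰 = ∅`.

For the other inclusion let `c ∈ 𝒰_r' ∖ 𝒰_q'` and let `b` be the supremum of all tails and
reflected tails of `c` relevant for univoqueness. It is admissible (`adm_lexSup`), so `b = α(t)`
with `t ∈ 𝒱` and `q ≤ t ≤ r`, and `c ∈ 𝒱_t'` (`mem_vseq`). If `t > q`, self-reflection of `α(t)`
forces the supremum to be attained: a tail of `c` that agrees with `α(t)` up to the reflection
point is also bounded below by `α(t)` after it. So `c ∉ 𝒰_t'`, and in particular `t < r`.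

Finiteness of `[q, r) ∩ 𝒱` is compactness of `{0, …, M}^ℕ`: self-reflection excludes accumulation
from the left, and periodicity of `α(t)` for `t ∈ 𝒱 ∖ 𝒰` (`exists_period`) from the right.
-/

noncomputable section

/-- The largest integer smaller than `q`, as a natural number (for `q > 1` this is `⌈q⌉ - 1`). -/
def topDigit (q : ℝ) : ℕ := ⌈q⌉.toNat - 1

/-- Greedy digit associated to a remainder `y` : the largest nonnegative integer `b` with
`b < q` and `b ≤ q * y`. -/
def gDigit (q y : ℝ) : ℕ := min (topDigit q) ⌊q * y⌋₊

/-- Remainders of the greedy algorithm in base `q` starting from `x`. -/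
def gRem (q x : ℝ) : ℕ → ℝ
  | 0 => x
  | n + 1 => q * gRem q x n - gDigit q (gRem q x n)

/-- The greedy expansion of `x` in base `q`, `0`-indexed: `greedy q x n` is the digit `b_{n+1}`,
i.e. the largest integer smaller than `q` such that `∑_{i ≤ n} (greedy q x i) / q^(i+1) ≤ x`. -/
def greedy (q x : ℝ) (n : ℕ) : ℕ := gDigit q (gRem q x n)

/-- Quasi-greedy digit associated to a remainder `y` : the largest nonnegative integer `b` with
`b < q` and `b < q * y` (it is `0` when no such integer exists, matching the convention that the
quasi-greedy expansion of `0` is `0^∞`). -/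
def qgDigit (q y : ℝ) : ℕ := min (topDigit q) (⌈q * y⌉.toNat - 1)

/-- Remainders of the quasi-greedy algorithm in base `q` starting from `x`. -/
def qgRem (q x : ℝ) : ℕ → ℝ
  | 0 => x
  | n + 1 => q * qgRem q x n - qgDigit q (qgRem q x n)

/-- The quasi-greedy expansion of `x` in base `q`, `0`-indexed: `quasiGreedy q x n` is the digit
`a_{n+1}`, i.e. the largest integer smaller than `q` with `∑_{i ≤ n} (quasiGreedy q x i) / q^(i+1) < x`
(with the convention `quasiGreedy q 0 = 0^∞`). -/
def quasiGreedy (q x : ℝ) (n : ℕ) : ℕ := qgDigit q (qgRem q x n)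

/-- `alphaSeq q` is the quasi-greedy expansion of `1` in base `q` (`0`-indexed:
`alphaSeq q (i-1) = α_i(q)`). -/
def alphaSeq (q : ℝ) : ℕ → ℕ := quasiGreedy q 1

/-- Strict lexicographic order on digit sequences. -/
def lexLt (a b : ℕ → ℕ) : Prop := ∃ n, (∀ i, i < n → a i = b i) ∧ a n < b n

/-- Lexicographic order on digit sequences. -/
def lexLe (a b : ℕ → ℕ) : Prop := lexLt a b ∨ a = b

/-- `c` is an expansion of `x` in base `q`: the digits are nonnegative integers smaller than `q`
and `x = ∑_{i≥0} c_i / q^(i+1)`. -/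
def IsExpansion (q : ℝ) (c : ℕ → ℕ) (x : ℝ) : Prop :=
  (∀ i, (c i : ℝ) < q) ∧ x = ∑' i : ℕ, (c i : ℝ) / q ^ (i + 1)

/-- The interval `J_q = [0, (⌈q⌉-1)/(q-1)]` of numbers having an expansion in base `q`. -/
def Jset (q : ℝ) : Set ℝ := Set.Icc 0 (((⌈q⌉ : ℝ) - 1) / (q - 1))

/-- `USet q` is the set `𝒰_q` of numbers `x ∈ J_q` having a unique expansion in base `q`. -/
def USet (q : ℝ) : Set ℝ := {x | x ∈ Jset q ∧ ∃! c, IsExpansion q c x}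

/-- `USeq q` is the set `𝒰_q'` of univoque sequences in base `q`, i.e. sequences that are the
unique expansion in base `q` of some number. -/
def USeq (q : ℝ) : Set (ℕ → ℕ) :=
  {c | ∃ x, IsExpansion q c x ∧ ∀ c', IsExpansion q c' x → c' = c}

/-- The set `𝒰` of univoque bases: `q > 1` such that `1` has a unique expansion in base `q`. -/
def UnivBases : Set ℝ := {q | 1 < q ∧ ∃! c, IsExpansion q c 1}

/-- The set `𝒱_q`: numbers `x ∈ J_q` whose quasi-greedy expansion `(a_i)` satisfies
`overline{a_{n+1} a_{n+2} …} ≤ α_1 α_2 …` whenever `a_n > 0`. -/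
def VSet (q : ℝ) : Set ℝ :=
  {x | x ∈ Jset q ∧ ∀ n, 0 < quasiGreedy q x n →
    lexLe (fun i => topDigit q - quasiGreedy q x (n + 1 + i)) (alphaSeq q)}

/-- `VSeq q` is the set `𝒱_q'` of quasi-greedy expansions of elements of `𝒱_q`. -/
def VSeq (q : ℝ) : Set (ℕ → ℕ) := (fun x => quasiGreedy q x) '' VSet q

/-- The set `𝒱` of bases `q > 1` with `overline{α_{k+1} α_{k+2} …} ≤ α_1 α_2 …` for all `k ≥ 1`. -/
def VBases : Set ℝ :=
  {q | 1 < q ∧ ∀ k, 1 ≤ k → lexLe (fun i => topDigit q - alphaSeq q (k + i)) (alphaSeq q)}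

/-- A digit sequence is infinite if it has infinitely many nonzero terms. -/
def InfiniteSeq (c : ℕ → ℕ) : Prop := ∀ N, ∃ i, N ≤ i ∧ c i ≠ 0

/-- A digit sequence is ultimately periodic if some tail of it is periodic. -/
def UltimatelyPeriodic (c : ℕ → ℕ) : Prop := ∃ n p, 0 < p ∧ ∀ i, n ≤ i → c (i + p) = c i

end

/-! ### Lexicographic order, shifts and reflections -/

/-- The shifted sequence `c_k c_{k+1} …`. -/
def sh (k : ℕ) (c : ℕ → ℕ) : ℕ → ℕ := fun i => c (k + i)

/-- The reflection of a sequence over the alphabet `{0, …, M}`. -/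
def rf (M : ℕ) (c : ℕ → ℕ) : ℕ → ℕ := fun i => M - c i

theorem sh_sh (k l : ℕ) (c : ℕ → ℕ) : sh k (sh l c) = sh (l + k) c := by
  funext i; simp [sh, add_assoc]

theorem sh_zero (c : ℕ → ℕ) : sh 0 c = c := by
  funext i; simp [sh]

theorem sh_rf (M k : ℕ) (c : ℕ → ℕ) : sh k (rf M c) = rf M (sh k c) := rfl

theorem rf_rf {M : ℕ} {c : ℕ → ℕ} (hc : ∀ i, c i ≤ M) : rf M (rf M c) = c := by
  funext i; have := hc i; simp only [rf]; omega

theorem rf_le (M : ℕ) (c : ℕ → ℕ) (i : ℕ) : rf M c i ≤ M := Nat.sub_le _ _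

theorem lexLt_irrefl (a : ℕ → ℕ) : ¬ lexLt a a := fun ⟨_, _, h⟩ => lt_irrefl _ h

theorem lexLt_trans {a b c : ℕ → ℕ} (h : lexLt a b) (h' : lexLt b c) : lexLt a c := by
  obtain ⟨n, h1, h2⟩ := h
  obtain ⟨m, h3, h4⟩ := h'
  rcases lt_trichotomy n m with hnm | rfl | hnm
  · exact ⟨n, fun i hi => (h1 i hi).trans (h3 i (hi.trans hnm)), (h3 n hnm) ▸ h2⟩
  · exact ⟨n, fun i hi => (h1 i hi).trans (h3 i hi), h2.trans h4⟩
  · exact ⟨m, fun i hi => (h1 i (hi.trans hnm)).trans (h3 i hi), (h1 m hnm) ▸ h4⟩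

theorem lex_tri (a b : ℕ → ℕ) : lexLt a b ∨ a = b ∨ lexLt b a := by
  classical
  by_cases h : a = b
  · exact Or.inr (Or.inl h)
  have hex : ∃ n, a n ≠ b n := by
    by_contra hc; push Not at hc; exact h (funext hc)
  have h1 := Nat.find_spec hex
  have h2 : ∀ i, i < Nat.find hex → a i = b i := fun i hi => not_not.1 (Nat.find_min hex hi)
  rcases lt_or_gt_of_ne h1 with h3 | h3
  · exact Or.inl ⟨_, h2, h3⟩
  · exact Or.inr (Or.inr ⟨_, fun i hi => (h2 i hi).symm, h3⟩)

theorem not_lexLe {a b : ℕ → ℕ} : ¬ lexLe a b ↔ lexLt b a := by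
  constructor
  · intro h
    rcases lex_tri a b with h1 | h1 | h1
    · exact (h (Or.inl h1)).elim
    · exact (h (Or.inr h1)).elim
    · exact h1
  · rintro h (h1 | h1)
    · exact lexLt_irrefl _ (lexLt_trans h h1)
    · exact lexLt_irrefl _ (h1 ▸ h)

theorem lexLe_refl (a : ℕ → ℕ) : lexLe a a := Or.inr rfl

theorem lexLt_of_lt_of_le {a b c : ℕ → ℕ} (h : lexLt a b) (h' : lexLe b c) : lexLt a c := by
  rcases h' with h' | rfl
  · exact lexLt_trans h h'
  · exact h

theorem lexLt_of_le_of_lt {a b c : ℕ → ℕ} (h : lexLe a b) (h' : lexLt b c) : lexLt a c := by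
  rcases h with h | rfl
  · exact lexLt_trans h h'
  · exact h'

theorem lexLe_trans {a b c : ℕ → ℕ} (h : lexLe a b) (h' : lexLe b c) : lexLe a c := by
  rcases h with h | rfl
  · exact Or.inl (lexLt_of_lt_of_le h h')
  · exact h'

theorem lexLe_antisymm {a b : ℕ → ℕ} (h : lexLe a b) (h' : lexLe b a) : a = b := by
  rcases h with h | h
  · exact (not_lexLe.2 h h').elim
  · exact h

theorem lexLt_rf {M : ℕ} {a b : ℕ → ℕ} (hb : ∀ i, b i ≤ M) (h : lexLt a b) :
    lexLt (rf M b) (rf M a) := by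
  obtain ⟨n, h1, h2⟩ := h
  refine ⟨n, fun i hi => by simp [rf, h1 i hi], ?_⟩
  have := hb n
  simp only [rf]; omega

theorem lexLe_rf {M : ℕ} {a b : ℕ → ℕ} (hb : ∀ i, b i ≤ M) (h : lexLe a b) :
    lexLe (rf M b) (rf M a) := by
  rcases h with h | rfl
  · exact Or.inl (lexLt_rf hb h)
  · exact lexLe_refl _

theorem lexLt_of_head {a b : ℕ → ℕ} (h : a 0 < b 0) : lexLt a b :=
  ⟨0, fun _ hi => absurd hi (Nat.not_lt_zero _), h⟩

/-- Cancelling a common prefix of length `n` in a strict comparison. -/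
theorem lexLt_tail {a b : ℕ → ℕ} (n : ℕ) (h : ∀ i, i < n → a i = b i) (hlt : lexLt a b) :
    lexLt (sh n a) (sh n b) := by
  obtain ⟨m, h1, h2⟩ := hlt
  have hnm : n ≤ m := by
    by_contra hc
    exact absurd (h m (by omega)) h2.ne
  refine ⟨m - n, fun i hi => h1 _ (by omega), ?_⟩
  simp only [sh]
  rwa [Nat.add_sub_cancel' hnm]

theorem lexLt_cons {a b : ℕ → ℕ} (n : ℕ) (h : ∀ i, i < n → a i = b i)
    (hlt : lexLt (sh n a) (sh n b)) : lexLt a b := by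
  obtain ⟨m, h1, h2⟩ := hlt
  refine ⟨n + m, fun i hi => ?_, h2⟩
  by_cases hin : i < n
  · exact h i hin
  · have := h1 (i - n) (by omega)
    simp only [sh] at this
    rwa [Nat.add_sub_cancel' (by omega)] at this

theorem lexLe_tail {a b : ℕ → ℕ} (n : ℕ) (h : ∀ i, i < n → a i = b i) (hle : lexLe a b) :
    lexLe (sh n a) (sh n b) := by
  rcases hle with hlt | rfl
  · exact Or.inl (lexLt_tail n h hlt)
  · exact lexLe_refl _

theorem lexLe_cons {a b : ℕ → ℕ} (n : ℕ) (h : ∀ i, i < n → a i = b i)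
    (hle : lexLe (sh n a) (sh n b)) : lexLe a b := by
  by_contra hc
  rw [not_lexLe] at hc
  exact not_lexLe.2 (lexLt_tail n (fun i hi => (h i hi).symm) hc) hle

theorem lexLe_head {a b : ℕ → ℕ} (h : lexLe a b) : a 0 ≤ b 0 := by
  by_contra hc
  exact not_lexLe.2 (lexLt_of_head (not_le.1 hc)) h

/-- If `d < e` and the sequences `d'`, `e'` agree with `d`, `e` far enough, then `d' < e'`;
the bound on the required agreement is the position of the first difference. -/
theorem lexLt_open {d e : ℕ → ℕ} (h : lexLt d e) :
    ∃ m, ∀ d' e' : ℕ → ℕ, (∀ i, i < m → d' i = d i) → (∀ i, i < m → e' i = e i) → lexLt d' e' := by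
  obtain ⟨n, h1, h2⟩ := h
  refine ⟨n + 1, fun d' e' hd he => ⟨n, fun i hi => ?_, ?_⟩⟩
  · rw [hd i (by omega), he i (by omega), h1 i hi]
  · rw [hd n (by omega), he n (by omega)]; exact h2

/-- Let `a` start with `M` and satisfy `σ a ≤ a`. If the tails of `y` following digits `y_n < M`
are at most `a`, then `σ^{k₀} y ≤ a` propagates to all later tails: past a digit `M = a_0` a
comparison with `a` becomes one with `σ a ≤ a`. -/
theorem upgrade_le {M : ℕ} {y a : ℕ → ℕ} (hy : ∀ i, y i ≤ M) (ha0 : a 0 = M)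
    (ha : lexLe (sh 1 a) a) (h : ∀ n, y n < M → lexLe (sh (n + 1) y) a)
    {k₀ : ℕ} (h0 : lexLe (sh k₀ y) a) : ∀ k, k₀ ≤ k → lexLe (sh k y) a := by
  intro k hk
  induction k, hk using Nat.le_induction with
  | base => exact h0
  | succ k hk ih =>
    rcases lt_or_eq_of_le (hy k) with hlt | heq
    · exact h k hlt
    · have := lexLe_tail 1 (fun i hi => by
        obtain rfl : i = 0 := by omega
        simp [sh, heq, ha0]) ih
      rw [sh_sh] at this
      exact lexLe_trans this ha

theorem upgrade_lt {M : ℕ} {y a : ℕ → ℕ} (hy : ∀ i, y i ≤ M) (ha0 : a 0 = M)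
    (ha : lexLe (sh 1 a) a) (h : ∀ n, y n < M → lexLt (sh (n + 1) y) a)
    {k₀ : ℕ} (h0 : lexLt (sh k₀ y) a) : ∀ k, k₀ ≤ k → lexLt (sh k y) a := by
  intro k hk
  induction k, hk using Nat.le_induction with
  | base => exact h0
  | succ k hk ih =>
    rcases lt_or_eq_of_le (hy k) with hlt | heq
    · exact h k hlt
    · have := lexLt_tail 1 (fun i hi => by
        obtain rfl : i = 0 := by omega
        simp [sh, heq, ha0]) ih
      rw [sh_sh] at this
      exact lexLt_of_lt_of_le this ha

theorem le_of_lex_const {M : ℕ} {a : ℕ → ℕ} (ha : ∀ i, a i ≤ M) (h : lexLe (fun _ => M) a) :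
    ∀ i, a i = M := by
  rcases h with ⟨n, _, h⟩ | h
  · exact absurd (ha n) (not_le.2 h)
  · intro i; rw [← h]

/-! ### Building univoque sequences from finite words -/

/-- If all proper shifts of `y` are smaller than `a`, and `a` dominates its own shifts, there are
arbitrarily long prefixes of `y` all of whose proper suffixes are already strictly smaller than the
prefix of `a` of the same length. -/
theorem exists_good_length {y a : ℕ → ℕ} (hy : ∀ k, 1 ≤ k → lexLt (sh k y) a)
    (ha : ∀ k, lexLe (sh k a) a) (N : ℕ) :
    ∃ m, N < m ∧ ∀ k, 1 ≤ k → k < m →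
      ∃ j, k + j < m ∧ (∀ i, i < j → y (k + i) = a i) ∧ y (k + j) < a j := by
  classical
  choose! g hg1 hg2 using hy
  by_cases hgood : ∀ k, 1 ≤ k → k < N + 1 → k + g k < N + 1
  · exact ⟨N + 1, by omega, fun k h1 h2 => ⟨g k, hgood k h1 h2, hg1 k h1, hg2 k h1⟩⟩
  -- Take the leftmost suffix whose first difference lies beyond `N`, and cut just after
  -- that difference.
  have hex : ∃ k, 1 ≤ k ∧ k < N + 1 ∧ N + 1 ≤ k + g k := by
    push Not at hgood; exact hgood
  obtain ⟨hk1, hk2, hk3⟩ := Nat.find_spec hex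
  have hmin := fun k' (h : k' < Nat.find hex) => Nat.find_min hex h
  generalize Nat.find hex = k at hk1 hk2 hk3 hmin
  refine ⟨k + g k + 1, by omega, fun k' h1 h2 => ⟨g k', ?_, hg1 k' h1, hg2 k' h1⟩⟩
  rcases lt_trichotomy k' k with h | rfl | h
  · have := hmin k' h
    by_contra hc
    exact this ⟨h1, by omega, by omega⟩
  · omega
  · by_contra hc
    -- Otherwise the shift of `a` by `k' - k` would exceed `a`.
    have e1 := hg1 k hk1
    have e2 := hg2 k hk1
    have e3 := hg1 k' h1
    simp only [sh] at e1 e2 e3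
    refine not_lexLe.2 ⟨g k - (k' - k), fun i hi => ?_, ?_⟩ (ha (k' - k))
    · have a1 := e1 (k' - k + i) (by omega)
      have a2 := e3 i (by omega)
      rw [show k + (k' - k + i) = k' + i by omega] at a1
      simp only [sh]; rw [← a1, ← a2]
    · have a2 := e3 (g k - (k' - k)) (by omega)
      rw [show k' + (g k - (k' - k)) = k + g k by omega] at a2
      simp only [sh]
      rw [← a2, show k' - k + (g k - (k' - k)) = g k by omega]
      exact e2

/-- The word `v_0 … v_{m-1}` with its last letter lowered by one, read periodically. -/
def lowPer (m : ℕ) (v : ℕ → ℕ) (i : ℕ) : ℕ := if i % m = m - 1 then v (m - 1) - 1 else v (i % m)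

/-- The sequence `u (ū⁺)^∞`, where `u = v_0 … v_{m-1}` and `ū⁺` is the reflection of `u` with its
last letter raised by one. -/
def gam (M m : ℕ) (v : ℕ → ℕ) (i : ℕ) : ℕ := if i < m then v i else M - lowPer m v i

theorem lowPer_add_mul {m : ℕ} (v : ℕ → ℕ) (a i : ℕ) : lowPer m v (m * a + i) = lowPer m v i := by
  simp [lowPer]

theorem lowPer_of_lt {m : ℕ} (v : ℕ → ℕ) {i : ℕ} (h : i < m - 1) : lowPer m v i = v i := by
  rw [lowPer, Nat.mod_eq_of_lt (by omega), if_neg (by omega)]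

theorem lowPer_last {m : ℕ} (v : ℕ → ℕ) (h : 0 < m) : lowPer m v (m - 1) = v (m - 1) - 1 := by
  rw [lowPer, Nat.mod_eq_of_lt (by omega), if_pos rfl]

theorem lowPer_le {M m : ℕ} {v : ℕ → ℕ} (hv : ∀ i, i < m → v i ≤ M) (hm : 0 < m) (i : ℕ) :
    lowPer m v i ≤ M := by
  have h1 := hv (i % m) (Nat.mod_lt _ hm)
  have h2 := hv (m - 1) (by omega)
  unfold lowPer; split_ifs <;> omega

theorem gam_le {M m : ℕ} {v : ℕ → ℕ} (hv : ∀ i, i < m → v i ≤ M) (i : ℕ) : gam M m v i ≤ M := by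
  unfold gam; split_ifs with h
  · exact hv i h
  · exact Nat.sub_le _ _

/-- If the proper suffixes of `u = v_0 … v_{m-1}` are at most the prefixes of `u`, and their
reflections strictly smaller than these, then all proper shifts of `u (ū⁺)^∞` and
their reflections are strictly smaller than the sequence itself. -/
theorem gam_univoque {M m : ℕ} {v : ℕ → ℕ} (hM : 1 ≤ M) (hm : 2 ≤ m)
    (hv : ∀ i, i < m → v i ≤ M) (hv0 : v 0 = M)
    (h1 : ∀ k, 1 ≤ k → k < m → (∃ j, k + j < m ∧ (∀ i, i < j → v (k + i) = v i) ∧ v (k + j) < v j)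
      ∨ ∀ i, k + i < m → v (k + i) = v i)
    (h2 : ∀ k, 1 ≤ k → k < m →
      ∃ j, k + j < m ∧ (∀ i, i < j → M - v (k + i) = v i) ∧ M - v (k + j) < v j) :
    ∀ k, 1 ≤ k → lexLt (sh k (gam M m v)) (gam M m v) ∧
      lexLt (rf M (sh k (gam M m v))) (gam M m v) := by
  have glt : ∀ i, i < m → gam M m v i = v i := fun i hi => by simp [gam, hi]
  have gge : ∀ a i, 1 ≤ a → gam M m v (m * a + i) = M - lowPer m v i := fun a i ha => by
    have : ¬ (m * a + i < m) := by nlinarith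
    rw [gam, if_neg this, lowPer_add_mul]
  have hlast : 1 ≤ v (m - 1) := by
    obtain ⟨j, hj1, _, hj3⟩ := h2 (m - 1) (by omega) (by omega)
    have : j = 0 := by omega
    subst this
    rw [hv0] at hj3; simp at hj3; omega
  -- The periodic part is smaller than any proper suffix of the first block.
  have key : ∀ k, 1 ≤ k → k < m → ∃ j, j < k ∧ j < m - 1 ∧
      (∀ i, i < j → M - lowPer m v i = v (m - k + i)) ∧ M - lowPer m v j < v (m - k + j) := by
    intro k hk1 hk2
    obtain ⟨j, hj1, hj2, hj3⟩ := h2 (m - k) (by omega) (by omega)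
    refine ⟨j, by omega, by omega, fun i hi => ?_, ?_⟩
    · have := hj2 i hi
      have := hv (m - k + i) (by omega)
      rw [lowPer_of_lt v (by omega)]; omega
    · have := hv (m - k + j) hj1
      have := hv j (by omega)
      rw [lowPer_of_lt v (by omega)]; omega
  intro k hk
  by_cases hkm : k < m
  · constructor
    · rcases h1 k hk hkm with ⟨j, hj1, hj2, hj3⟩ | hall
      · refine ⟨j, fun i hi => ?_, ?_⟩
        · simp only [sh]; rw [glt _ (by omega), glt _ (by omega), hj2 i hi]
        · simp only [sh]; rwa [glt _ (by omega), glt _ (by omega)]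
      · obtain ⟨j, hj1, hj2, hj3, hj4⟩ := key k hk hkm
        refine lexLt_cons (m - k) (fun i hi => ?_) ⟨j, fun i hi => ?_, ?_⟩
        · simp only [sh]; rw [glt _ (by omega), glt _ (by omega), hall i (by omega)]
        · simp only [sh]
          rw [show k + (m - k + i) = m * 1 + i by omega, gge 1 i le_rfl, glt _ (by omega), hj3 i hi]
        · simp only [sh]
          rwa [show k + (m - k + j) = m * 1 + j by omega, gge 1 j le_rfl, glt _ (by omega)]
    · obtain ⟨j, hj1, hj2, hj3⟩ := h2 k hk hkm
      refine ⟨j, fun i hi => ?_, ?_⟩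
      · simp only [sh, rf]; rw [glt _ (by omega), glt _ (by omega), hj2 i hi]
      · simp only [sh, rf]; rwa [glt _ (by omega), glt _ (by omega)]
  · obtain ⟨a, k0, ha, hk0, rfl⟩ : ∃ a k0, 1 ≤ a ∧ k0 < m ∧ k = m * a + k0 :=
      ⟨k / m, k % m, (Nat.one_le_div_iff (by omega)).2 (by omega), Nat.mod_lt _ (by omega),
        (Nat.div_add_mod k m).symm⟩
    have hsh : ∀ i, sh (m * a + k0) (gam M m v) i = M - lowPer m v (k0 + i) := fun i => by
      simp only [sh]; rw [add_assoc, gge a _ ha]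
    constructor
    · rcases Nat.eq_zero_or_pos k0 with rfl | hk0'
      · apply lexLt_of_head
        rw [hsh, glt _ (by omega), hv0, lowPer_of_lt v (by omega), add_zero, hv0]
        omega
      · obtain ⟨j, hj1, hj2, hj3⟩ := h2 k0 hk0' hk0
        by_cases hjm : k0 + j < m - 1
        · refine ⟨j, fun i hi => ?_, ?_⟩
          · rw [hsh, glt _ (by omega), lowPer_of_lt v (by omega), hj2 i hi]
          · rwa [hsh, glt _ (by omega), lowPer_of_lt v (by omega)]
        · have hjeq : k0 + j = m - 1 := by omega
          have hvl := hv (m - 1) (by omega)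
          have e1 : ∀ i, i < j → sh (m * a + k0) (gam M m v) i = gam M m v i := fun i hi => by
            rw [hsh, glt _ (by omega), lowPer_of_lt v (by omega), hj2 i hi]
          rcases lt_or_ge (M - (v (m - 1) - 1)) (v j) with hlt | hge
          · refine ⟨j, e1, ?_⟩
            rwa [hsh, glt _ (by omega), hjeq, lowPer_last v (by omega)]
          · obtain ⟨j', hj1', hj2', hj3', hj4'⟩ := key k0 hk0' hk0
            rw [hjeq] at hj3
            refine lexLt_cons (m - k0) (fun i hi => ?_) ⟨j', fun i hi => ?_, ?_⟩
            · rcases lt_or_eq_of_le (show i ≤ j by omega) with hi' | rfl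
              · exact e1 i hi'
              · rw [hsh, glt _ (by omega), hjeq, lowPer_last v (by omega)]; omega
            · rw [sh_sh, sh, show m * a + k0 + (m - k0) + i = m * (a + 1) + i by
                rw [mul_add]; omega, gge _ _ (by omega), sh, glt _ (by omega), hj3' i hi]
            · rw [sh_sh, sh, show m * a + k0 + (m - k0) + j' = m * (a + 1) + j' by
                rw [mul_add]; omega, gge _ _ (by omega), sh, glt _ (by omega)]
              exact hj4'
    · have hrf : ∀ i, rf M (sh (m * a + k0) (gam M m v)) i = lowPer m v (k0 + i) := fun i => by
        have := lowPer_le hv (by omega) (k0 + i)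
        rw [rf, hsh]; omega
      have hor : (∃ j, k0 + j < m ∧ (∀ i, i < j → v (k0 + i) = v i) ∧ v (k0 + j) < v j)
          ∨ ∀ i, k0 + i < m → v (k0 + i) = v i := by
        rcases Nat.eq_zero_or_pos k0 with rfl | hk0'
        · right; intro i _; simp
        · exact h1 k0 hk0' hk0
      rcases hor with ⟨j, hj1, hj2, hj3⟩ | hall
      · refine ⟨j, fun i hi => ?_, ?_⟩
        · rw [hrf, glt _ (by omega), lowPer_of_lt v (by omega), hj2 i hi]
        · rw [hrf, glt _ (by omega)]
          rcases lt_or_eq_of_le (show k0 + j ≤ m - 1 by omega) with h | h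
          · rwa [lowPer_of_lt v h]
          · rw [h] at hj3 ⊢; rw [lowPer_last v (by omega)]; omega
      · refine ⟨m - 1 - k0, fun i hi => ?_, ?_⟩
        · rw [hrf, glt _ (by omega), lowPer_of_lt v (by omega), hall i (by omega)]
        · have := hall (m - 1 - k0) (by omega)
          rw [show k0 + (m - 1 - k0) = m - 1 by omega] at this
          rw [hrf, glt _ (by omega), show k0 + (m - 1 - k0) = m - 1 by omega,
            lowPer_last v (by omega)]
          omega

/-- Sequences that can be quasi-greedy expansions of `1` in a base of `𝒱` with top digit `M`. -/
structure Adm (M : ℕ) (d : ℕ → ℕ) : Prop where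
  le : ∀ i, d i ≤ M
  zero : d 0 = M
  shift : ∀ k, lexLe (sh k d) d
  refl : ∀ k, lexLe (rf M (sh k d)) d

/-- Sequences that can be the unique expansion of `1` in a non-integer base with top digit `M`. -/
structure StrictAdm (M : ℕ) (d : ℕ → ℕ) : Prop where
  le : ∀ i, d i ≤ M
  zero : d 0 = M
  shift : ∀ k, 1 ≤ k → lexLt (sh k d) d
  refl : ∀ k, 1 ≤ k → lexLt (rf M (sh k d)) d

theorem StrictAdm.adm {M : ℕ} {d : ℕ → ℕ} (h : StrictAdm M d) : Adm M d where
  le := h.le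
  zero := h.zero
  shift := fun k => by
    rcases Nat.eq_zero_or_pos k with rfl | hk
    · rw [sh_zero]; exact lexLe_refl _
    · exact Or.inl (h.shift k hk)
  refl := fun k => by
    rcases Nat.eq_zero_or_pos k with rfl | hk
    · rw [sh_zero]
      have h0 : rf M d 0 ≤ d 0 := by rw [h.zero]; exact rf_le _ _ _
      rcases lt_or_eq_of_le h0 with h1 | h1
      · exact Or.inl (lexLt_of_head h1)
      · simp only [rf, h.zero, Nat.sub_self] at h1
        right; funext i
        have := h.le i
        simp only [rf]; omega
    · exact Or.inl (h.refl k hk)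

theorem Adm.infinite {M : ℕ} (hM : 1 ≤ M) {d : ℕ → ℕ} (h : Adm M d) (N : ℕ) :
    ∃ i, N ≤ i ∧ d i ≠ 0 := by
  by_contra hc
  push Not at hc
  have e : rf M (sh N d) = fun _ => M := by
    funext i; simp [rf, sh, hc (N + i) (by omega)]
  have := le_of_lex_const h.le (e ▸ h.refl N) N
  have := hc N le_rfl
  omega

/-- Strictly admissible sequences approximating `d` when no reflected shift of `d` equals `d`. -/
theorem Adm.approx {M : ℕ} (hM : 1 ≤ M) {d : ℕ → ℕ} (h : Adm M d)
    (hs : ∀ k, 1 ≤ k → lexLt (rf M (sh k d)) d) (N : ℕ) :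
    ∃ g, StrictAdm M g ∧ ∀ i, i < N → g i = d i := by
  obtain ⟨m, hm, hgood⟩ := exists_good_length (y := rf M d) (a := d) hs h.shift (N + 1)
  refine ⟨gam M m d, ?_, fun i hi => by simp [gam, show i < m by omega]⟩
  have := gam_univoque hM (by omega : 2 ≤ m) (fun i _ => h.le i) h.zero ?_ hgood
  · exact ⟨gam_le fun i _ => h.le i, by simp [gam, show 0 < m by omega, h.zero],
      fun k hk => (this k hk).1, fun k hk => (this k hk).2⟩
  · intro k _ _
    rcases h.shift k with ⟨j, hj1, hj2⟩ | he
    · by_cases hjm : k + j < m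
      · exact Or.inl ⟨j, hjm, hj1, hj2⟩
      · exact Or.inr fun i hi => hj1 i (by omega)
    · exact Or.inr fun i _ => congrFun he i

/-- Every strictly admissible sequence is a limit of larger strictly admissible sequences. -/
theorem StrictAdm.approx_right {M : ℕ} (hM : 1 ≤ M) {d : ℕ → ℕ} (h : StrictAdm M d) (N : ℕ) :
    ∃ g, StrictAdm M g ∧ lexLt d g ∧ ∀ i, i < N → g i = d i := by
  obtain ⟨m, hm, hgood⟩ := exists_good_length (y := d) (a := d) h.shift h.adm.shift (N + 1)
  have hlast : d (m - 1) < M := by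
    obtain ⟨j, hj1, _, hj3⟩ := hgood (m - 1) (by omega) (by omega)
    have : j = 0 := by omega
    subst this
    rwa [h.zero] at hj3
  let v : ℕ → ℕ := fun i => if i = m - 1 then d i + 1 else d i
  have vlast : v (m - 1) = d (m - 1) + 1 := by simp [v]
  have vne : ∀ i, i ≠ m - 1 → v i = d i := fun i hi => by simp [v, hi]
  have hv : ∀ i, i < m → v i ≤ M := fun i _ => by
    by_cases hi : i = m - 1
    · rw [hi, vlast]; exact hlast
    · rw [vne i hi]; exact h.le i
  have hv0 : v 0 = M := by rw [vne 0 (by omega), h.zero]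
  have gv : ∀ i, i < m → gam M m v i = v i := fun i hi => by simp [gam, hi]
  refine ⟨gam M m v, ?_, ⟨m - 1, fun i hi => ?_, ?_⟩, fun i hi => ?_⟩
  · have := gam_univoque hM (by omega : 2 ≤ m) hv hv0 ?_ ?_
    · exact ⟨gam_le hv, by rw [gv 0 (by omega), hv0], fun k hk => (this k hk).1,
        fun k hk => (this k hk).2⟩
    · intro k hk hkm
      obtain ⟨j, hj1, hj2, hj3⟩ := hgood k hk hkm
      have e : ∀ i, i < j → v (k + i) = v i := fun i hi => by
        rw [vne _ (by omega), vne _ (by omega), hj2 i hi]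
      rcases lt_or_eq_of_le (show k + j ≤ m - 1 by omega) with h' | h'
      · left
        refine ⟨j, hj1, e, ?_⟩
        rwa [vne _ (by omega), vne _ (by omega)]
      · have ej : v (k + j) ≤ v j := by
          rw [h'] at hj3 ⊢; rw [vlast, vne j (by omega)]; exact hj3
        rcases lt_or_eq_of_le ej with h'' | h''
        · exact Or.inl ⟨j, hj1, e, h''⟩
        · right; intro i hi
          rcases lt_or_eq_of_le (show i ≤ j by omega) with h3 | rfl
          · exact e i h3
          · exact h''
    · intro k hk hkm
      obtain ⟨j, hj1, hj2⟩ := h.refl k hk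
      simp only [sh, rf] at hj1 hj2
      by_cases hj : k + j < m - 1
      · refine ⟨j, by omega, fun i hi => ?_, ?_⟩
        · rw [vne _ (by omega), vne _ (by omega), hj1 i hi]
        · rwa [vne _ (by omega), vne _ (by omega)]
      · refine ⟨m - 1 - k, by omega, fun i hi => ?_, ?_⟩
        · rw [vne _ (by omega), vne _ (by omega), hj1 i (by omega)]
        · have : M - d (k + (m - 1 - k)) ≤ d (m - 1 - k) := by
            rcases lt_or_eq_of_le (show m - 1 - k ≤ j by omega) with h3 | h3
            · exact (hj1 _ h3).le
            · rw [h3]; exact hj2.le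
          rw [show k + (m - 1 - k) = m - 1 by omega] at this ⊢
          rw [vlast, vne (m - 1 - k) (by omega)]
          omega
  · rw [gv i (by omega), vne i (by omega)]
  · rw [gv _ (by omega), vlast]; omega
  · rw [gv i (by omega), vne i (by omega)]

/-! ### Values of digit sequences -/

/-- The value `∑ c_i x^{-(i+1)}` of a digit sequence in base `x`. -/
noncomputable def val (x : ℝ) (c : ℕ → ℕ) : ℝ := ∑' i : ℕ, (c i : ℝ) / x ^ (i + 1)

theorem hasSum_const {x : ℝ} (hx : 1 < x) (C : ℝ) :
    HasSum (fun i : ℕ => C / x ^ (i + 1)) (C / (x - 1)) := by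
  have h := (hasSum_geometric_of_lt_one (inv_nonneg.2 (by linarith : (0 : ℝ) ≤ x))
    (inv_lt_one_of_one_lt₀ hx)).mul_left (C / x)
  have hx0 : x ≠ 0 := by linarith
  have hx1 : x - 1 ≠ 0 := by linarith
  have e1 : (fun i : ℕ => C / x * x⁻¹ ^ i) = fun i : ℕ => C / x ^ (i + 1) := by
    funext i; rw [inv_pow, pow_succ]; field_simp
  have e2 : C / x * (1 - x⁻¹)⁻¹ = C / (x - 1) := by
    rw [show (1 - x⁻¹) = (x - 1) / x by field_simp]; field_simp
  rwa [e1, e2] at h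

theorem digit_term_le {x : ℝ} (hx : 1 < x) {M : ℕ} {c : ℕ → ℕ} (hc : ∀ i, c i ≤ M) (i : ℕ) :
    (c i : ℝ) / x ^ (i + 1) ≤ (M : ℝ) / x ^ (i + 1) := by
  have : (c i : ℝ) ≤ M := by exact_mod_cast hc i
  gcongr

theorem digit_term_nonneg {x : ℝ} (hx : 1 < x) (c : ℕ → ℕ) (i : ℕ) :
    0 ≤ (c i : ℝ) / x ^ (i + 1) := by positivity

theorem summ {x : ℝ} (hx : 1 < x) {M : ℕ} {c : ℕ → ℕ} (hc : ∀ i, c i ≤ M) :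
    Summable (fun i : ℕ => (c i : ℝ) / x ^ (i + 1)) :=
  Summable.of_nonneg_of_le (digit_term_nonneg hx c) (digit_term_le hx hc) (hasSum_const hx M).summable

theorem val_nonneg {x : ℝ} (hx : 1 < x) (c : ℕ → ℕ) : 0 ≤ val x c :=
  tsum_nonneg (digit_term_nonneg hx c)

theorem val_le {x : ℝ} (hx : 1 < x) {M : ℕ} {c : ℕ → ℕ} (hc : ∀ i, c i ≤ M) :
    val x c ≤ M / (x - 1) := by
  rw [← (hasSum_const hx (M : ℝ)).tsum_eq]
  exact (summ hx hc).tsum_le_tsum (digit_term_le hx hc) (hasSum_const hx (M : ℝ)).summable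

theorem val_pos {x : ℝ} (hx : 1 < x) {M : ℕ} {c : ℕ → ℕ} (hc : ∀ i, c i ≤ M) {j : ℕ}
    (hj : c j ≠ 0) : 0 < val x c := by
  refine (summ hx hc).tsum_pos (digit_term_nonneg hx c) j ?_
  have : (0 : ℝ) < c j := by exact_mod_cast Nat.pos_of_ne_zero hj
  positivity

theorem val_zero (x : ℝ) : val x (fun _ => 0) = 0 := by simp [val]

theorem val_rf {x : ℝ} (hx : 1 < x) {M : ℕ} {c : ℕ → ℕ} (hc : ∀ i, c i ≤ M) :
    val x (rf M c) = M / (x - 1) - val x c := by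
  rw [← (hasSum_const hx (M : ℝ)).tsum_eq, val, val,
    ← (hasSum_const hx (M : ℝ)).summable.tsum_sub (summ hx hc)]
  congr 1; funext i
  rw [rf, Nat.cast_sub (hc i), sub_div]

theorem val_split {x : ℝ} (hx : 1 < x) {M : ℕ} {c : ℕ → ℕ} (hc : ∀ i, c i ≤ M) (n : ℕ) :
    val x c = ∑ i ∈ Finset.range n, (c i : ℝ) / x ^ (i + 1) + val x (sh n c) / x ^ n := by
  have hx0 : x ≠ 0 := by linarith
  rw [val, ← (summ hx hc).sum_add_tsum_nat_add n, val, ← tsum_div_const]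
  congr 2; funext i
  rw [sh, add_comm i n, div_div, ← pow_add]
  congr 2; ring

theorem val_head {x : ℝ} (hx : 1 < x) {M : ℕ} {c : ℕ → ℕ} (hc : ∀ i, c i ≤ M) :
    x * val x c = c 0 + val x (sh 1 c) := by
  have hx0 : x ≠ 0 := by linarith
  rw [val_split hx hc 1]
  simp; field_simp

theorem sh_le {M : ℕ} {c : ℕ → ℕ} (hc : ∀ i, c i ≤ M) (n : ℕ) : ∀ i, sh n c i ≤ M :=
  fun i => hc (n + i)

theorem val_step {x : ℝ} (hx : 1 < x) {M : ℕ} {c : ℕ → ℕ} (hc : ∀ i, c i ≤ M) (n : ℕ) :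
    x * val x (sh n c) = c n + val x (sh (n + 1) c) := by
  rw [val_head hx (sh_le hc n), sh_sh]; simp [sh]

/-- The values of two sequences with a common prefix of length `n` compare as their tails. -/
theorem val_sub {x : ℝ} (hx : 1 < x) {M : ℕ} {c d : ℕ → ℕ} (hc : ∀ i, c i ≤ M)
    (hd : ∀ i, d i ≤ M) (n : ℕ) (h : ∀ i, i < n → c i = d i) :
    val x c - val x d = (val x (sh n c) - val x (sh n d)) / x ^ n := by
  rw [val_split hx hc n, val_split hx hd n,
    Finset.sum_congr rfl (fun i hi => by rw [h i (Finset.mem_range.1 hi)])]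
  ring

theorem val_anti {x y : ℝ} (hx : 1 < x) (hxy : x < y) {M : ℕ} {c : ℕ → ℕ} (hc : ∀ i, c i ≤ M)
    {j : ℕ} (hj : c j ≠ 0) : val y c < val x c := by
  refine Summable.tsum_lt_tsum (i := j) (fun i => ?_) ?_ (summ (hx.trans hxy) hc) (summ hx hc)
  · change (c i : ℝ) / y ^ (i + 1) ≤ (c i : ℝ) / x ^ (i + 1)
    gcongr
  · have : (0 : ℝ) < c j := by exact_mod_cast Nat.pos_of_ne_zero hj
    gcongr

theorem val_close {x : ℝ} (hx : 1 < x) {M : ℕ} {c d : ℕ → ℕ} (hc : ∀ i, c i ≤ M)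
    (hd : ∀ i, d i ≤ M) (n : ℕ) (h : ∀ i, i < n → c i = d i) :
    |val x c - val x d| ≤ M / (x - 1) / x ^ n := by
  have hp : (0 : ℝ) < x ^ n := by positivity
  rw [val_sub hx hc hd n h, abs_div, abs_of_pos hp]
  have h1 := val_nonneg hx (sh n c)
  have h2 := val_nonneg hx (sh n d)
  have h3 := val_le hx (sh_le hc n)
  have h4 := val_le hx (sh_le hd n)
  have : |val x (sh n c) - val x (sh n d)| ≤ M / (x - 1) := abs_le.2 ⟨by linarith, by linarith⟩
  gcongr

theorem val_near {x : ℝ} (hx : 1 < x) {M : ℕ} {ε : ℝ} (hε : 0 < ε) :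
    ∃ m, ∀ c d : ℕ → ℕ, (∀ i, c i ≤ M) → (∀ i, d i ≤ M) → (∀ i, i < m → c i = d i) →
      |val x c - val x d| < ε := by
  have h0 : Filter.Tendsto (fun n : ℕ => (M : ℝ) / (x - 1) / x ^ n) Filter.atTop (nhds 0) :=
    Filter.Tendsto.const_div_atTop (tendsto_pow_atTop_atTop_of_one_lt hx) _
  obtain ⟨m, hm⟩ := (h0.eventually (gt_mem_nhds hε)).exists
  exact ⟨m, fun c d hc hd h => (val_close hx hc hd m h).trans_lt hm⟩

/-! ### Quasi-greedy expansions -/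

/-- `M` is the top digit of the base `x > 1`, that is `⌈x⌉ = M + 1`. -/
structure Base (M : ℕ) (x : ℝ) : Prop where
  one_le : 1 ≤ M
  lt : (M : ℝ) < x
  le : x ≤ M + 1

theorem Base.ceil {M : ℕ} {x : ℝ} (h : Base M x) : ⌈x⌉ = (M : ℤ) + 1 := by
  rw [Int.ceil_eq_iff]; push_cast
  exact ⟨by linarith [h.lt], h.le⟩

theorem Base.top {M : ℕ} {x : ℝ} (h : Base M x) : topDigit x = M := by
  rw [topDigit, h.ceil]; omega

theorem Base.one_lt {M : ℕ} {x : ℝ} (h : Base M x) : 1 < x := by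
  have : (1 : ℝ) ≤ M := by exact_mod_cast h.one_le
  linarith [h.lt]

theorem Base.of {x : ℝ} (hx : 1 < x) : Base (topDigit x) x := by
  have h1 : 2 ≤ ⌈x⌉ := by
    have : (1 : ℤ) < ⌈x⌉ := Int.lt_ceil.2 (by exact_mod_cast hx)
    omega
  have h2 : ((topDigit x : ℕ) : ℤ) = ⌈x⌉ - 1 := by rw [topDigit]; omega
  have h3 : ((topDigit x : ℕ) : ℝ) = (⌈x⌉ : ℝ) - 1 := by exact_mod_cast h2
  refine ⟨by omega, ?_, ?_⟩
  · rw [h3]; linarith [Int.ceil_lt_add_one x]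
  · rw [h3]; linarith [Int.le_ceil x]

theorem Base.one_le_top {M : ℕ} {x : ℝ} (h : Base M x) : (1 : ℝ) ≤ M / (x - 1) := by
  rw [le_div_iff₀ (by linarith [h.one_lt])]; linarith [h.le]

theorem Base.digit_iff {M : ℕ} {x : ℝ} (h : Base M x) (n : ℕ) : (n : ℝ) < x ↔ n ≤ M := by
  constructor
  · intro h1
    have : (n : ℝ) < (M + 1 : ℕ) := by push_cast; linarith [h.le]
    have := Nat.cast_lt.1 this
    omega
  · intro h1
    have : (n : ℝ) ≤ M := by exact_mod_cast h1
    linarith [h.lt]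

theorem qgDigit_le {M : ℕ} {x : ℝ} (h : Base M x) (y : ℝ) : qgDigit x y ≤ M := by
  rw [qgDigit, h.top]; exact min_le_left _ _

theorem quasiGreedy_le {M : ℕ} {x : ℝ} (h : Base M x) (y : ℝ) (i : ℕ) : quasiGreedy x y i ≤ M :=
  qgDigit_le h _

/-- The remainder left by a quasi-greedy digit is positive, stays in the interval `J_x`, and is at
most `1` unless the digit is the top one. -/
theorem qg_step {M : ℕ} {x : ℝ} (h : Base M x) {y : ℝ} (hy0 : 0 < y) (hy : y ≤ M / (x - 1)) :
    0 < x * y - qgDigit x y ∧ x * y - qgDigit x y ≤ M / (x - 1) ∧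
      (qgDigit x y < M ∨ y ≤ 1 → x * y - qgDigit x y ≤ 1) := by
  have hx := h.one_lt
  have hxy : 0 < x * y := by positivity
  have hc : 1 ≤ ⌈x * y⌉ := Int.one_le_ceil_iff.2 hxy
  have e : ((⌈x * y⌉.toNat - 1 : ℕ) : ℝ) = (⌈x * y⌉ : ℝ) - 1 := by
    have : ((⌈x * y⌉.toNat - 1 : ℕ) : ℤ) = ⌈x * y⌉ - 1 := by omega
    exact_mod_cast this
  have h1 := Int.ceil_lt_add_one (x * y)
  have h2 := Int.le_ceil (x * y)
  have h3 := h.one_le_top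
  have hM : M / (x - 1) * (x - 1) = M := div_mul_cancel₀ _ (by linarith)
  rcases le_total M (⌈x * y⌉.toNat - 1) with hle | hle
  · have hd : qgDigit x y = M := by rw [qgDigit, h.top, min_eq_left hle]
    have hle' : (M : ℝ) ≤ (⌈x * y⌉ : ℝ) - 1 := by rw [← e]; exact_mod_cast hle
    rw [hd]
    refine ⟨by linarith, ?_, ?_⟩
    · nlinarith
    · rintro (h4 | h4)
      · exact absurd h4 (lt_irrefl _)
      · nlinarith [h.le]
  · have hd : qgDigit x y = ⌈x * y⌉.toNat - 1 := by rw [qgDigit, h.top, min_eq_right hle]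
    rw [hd, e]
    exact ⟨by linarith, by linarith, fun _ => by linarith⟩

theorem qgRem_pos {M : ℕ} {x : ℝ} (h : Base M x) {y : ℝ} (hy0 : 0 < y) (hy : y ≤ M / (x - 1))
    (n : ℕ) : 0 < qgRem x y n ∧ qgRem x y n ≤ M / (x - 1) := by
  induction n with
  | zero => exact ⟨hy0, hy⟩
  | succ n ih =>
    have := qg_step h ih.1 ih.2
    exact ⟨this.1, this.2.1⟩

theorem qgRem_le_one {M : ℕ} {x : ℝ} (h : Base M x) (n : ℕ) : qgRem x 1 n ≤ 1 := by
  induction n with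
  | zero => exact le_rfl
  | succ n ih =>
    have h1 := qgRem_pos h one_pos h.one_le_top n
    exact (qg_step h h1.1 h1.2).2.2 (Or.inr ih)

theorem qgRem_shift (x y : ℝ) (n i : ℕ) : qgRem x (qgRem x y n) i = qgRem x y (n + i) := by
  induction i with
  | zero => rfl
  | succ i ih => rw [← add_assoc, qgRem, qgRem, ih]

theorem sh_quasiGreedy (x y : ℝ) (n : ℕ) : sh n (quasiGreedy x y) = quasiGreedy x (qgRem x y n) := by
  funext i; rw [sh, quasiGreedy, quasiGreedy, qgRem_shift]

theorem qg_partial {x : ℝ} (hx : 1 < x) (y : ℝ) (n : ℕ) :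
    y = ∑ i ∈ Finset.range n, (quasiGreedy x y i : ℝ) / x ^ (i + 1) + qgRem x y n / x ^ n := by
  have hx0 : x ≠ 0 := by linarith
  induction n with
  | zero => simp [qgRem]
  | succ n ih =>
    rw [Finset.sum_range_succ, qgRem]
    have : (quasiGreedy x y n : ℝ) / x ^ (n + 1) +
        (x * qgRem x y n - (qgDigit x (qgRem x y n) : ℝ)) / x ^ (n + 1) = qgRem x y n / x ^ n := by
      rw [quasiGreedy, pow_succ]; field_simp; ring
    rw [add_assoc, this]; exact ih

theorem val_quasiGreedy {M : ℕ} {x : ℝ} (h : Base M x) {y : ℝ} (hy0 : 0 < y)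
    (hy : y ≤ M / (x - 1)) : val x (quasiGreedy x y) = y := by
  have hx := h.one_lt
  have h1 := (summ hx (quasiGreedy_le h y)).hasSum.tendsto_sum_nat
  have h0 : Filter.Tendsto (fun n : ℕ => (M : ℝ) / (x - 1) / x ^ n) Filter.atTop (nhds 0) :=
    Filter.Tendsto.const_div_atTop (tendsto_pow_atTop_atTop_of_one_lt hx) _
  have h2 : Filter.Tendsto (fun n : ℕ => qgRem x y n / x ^ n) Filter.atTop (nhds 0) := by
    refine squeeze_zero (fun n => ?_) (fun n => ?_) h0
    · have := (qgRem_pos h hy0 hy n).1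
      positivity
    · have := (qgRem_pos h hy0 hy n).2
      gcongr
  have h3 := h1.add h2
  rw [add_zero] at h3
  refine tendsto_nhds_unique h3 ?_
  refine (tendsto_const_nhds (x := y)).congr fun n => ?_
  exact qg_partial hx y n

theorem quasiGreedy_zero (x : ℝ) : quasiGreedy x 0 = fun _ => 0 := by
  have h : ∀ n, qgRem x 0 n = 0 := by
    intro n
    induction n with
    | zero => rfl
    | succ n ih => rw [qgRem, ih]; simp [qgDigit]
  funext n; rw [quasiGreedy, h]; simp [qgDigit]

theorem val_quasiGreedy' {M : ℕ} {x : ℝ} (h : Base M x) {y : ℝ} (hy0 : 0 ≤ y)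
    (hy : y ≤ M / (x - 1)) : val x (quasiGreedy x y) = y := by
  rcases hy0.eq_or_lt with rfl | h0
  · rw [quasiGreedy_zero, val_zero]
  · exact val_quasiGreedy h h0 hy

theorem quasiGreedy_infinite {M : ℕ} {x : ℝ} (h : Base M x) {y : ℝ} (hy0 : 0 < y)
    (hy : y ≤ M / (x - 1)) : InfiniteSeq (quasiGreedy x y) := by
  intro N
  by_contra hc
  push Not at hc
  have h1 := qgRem_pos h hy0 hy N
  have h2 := val_quasiGreedy h h1.1 h1.2
  rw [← sh_quasiGreedy, show sh N (quasiGreedy x y) = fun _ => 0 from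
    funext fun i => hc (N + i) (by omega), val_zero] at h2
  linarith

theorem val_pos_of_infinite {x : ℝ} (hx : 1 < x) {M : ℕ} {c : ℕ → ℕ} (hc : ∀ i, c i ≤ M)
    (hinf : InfiniteSeq c) (n : ℕ) : 0 < val x (sh n c) := by
  obtain ⟨i, hi1, hi2⟩ := hinf n
  exact val_pos hx (sh_le hc n) (j := i - n) (by rw [sh, Nat.add_sub_cancel' hi1]; exact hi2)

/-- The quasi-greedy expansion is the largest infinite sequence with value at most `y`. -/
theorem le_quasiGreedy {M : ℕ} {x : ℝ} (h : Base M x) {c : ℕ → ℕ} (hc : ∀ i, c i ≤ M)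
    (hinf : InfiniteSeq c) {y : ℝ} (hle : val x c ≤ y) : lexLe c (quasiGreedy x y) := by
  by_contra hcon
  obtain ⟨n, h1, h2⟩ := not_lexLe.1 hcon
  have hx := h.one_lt
  have hp : (0 : ℝ) < x ^ n := by positivity
  have hr : val x (sh n c) ≤ qgRem x y n := by
    have e1 := qg_partial hx y n
    have e2 := val_split hx hc n
    rw [Finset.sum_congr rfl (fun i hi => by rw [h1 i (Finset.mem_range.1 hi)])] at e1
    have : val x (sh n c) / x ^ n ≤ qgRem x y n / x ^ n := by linarith
    exact (div_le_div_iff_of_pos_right hp).1 this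
  have h3 := val_step hx hc n
  have h4 := val_pos_of_infinite hx hc hinf (n + 1)
  have h5 : (c n : ℝ) < x * qgRem x y n := by nlinarith
  have h6 : (c n : ℤ) < ⌈x * qgRem x y n⌉ := Int.lt_ceil.2 (by exact_mod_cast h5)
  rw [quasiGreedy, qgDigit, h.top] at h2
  have := hc n
  omega

/-- An infinite sequence whose tails after digits below `M` have value at most `1` is
quasi-greedy. -/
theorem eq_quasiGreedy {M : ℕ} {x : ℝ} (h : Base M x) {c : ℕ → ℕ} (hc : ∀ i, c i ≤ M)
    (hinf : InfiniteSeq c) (ht : ∀ n, c n < M → val x (sh (n + 1) c) ≤ 1) :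
    quasiGreedy x (val x c) = c := by
  have hx := h.one_lt
  have key : ∀ n, qgDigit x (val x (sh n c)) = c n := by
    intro n
    have h4 := val_pos_of_infinite hx hc hinf (n + 1)
    rw [qgDigit, h.top, val_step hx hc n]
    rcases lt_or_eq_of_le (hc n) with hlt | heq
    · have := ht n hlt
      have e : ⌈(c n : ℝ) + val x (sh (n + 1) c)⌉ = (c n : ℤ) + 1 := by
        rw [Int.ceil_eq_iff]; push_cast
        exact ⟨by linarith, by linarith⟩
      rw [e]; omega
    · have : (c n : ℤ) < ⌈(c n : ℝ) + val x (sh (n + 1) c)⌉ :=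
        Int.lt_ceil.2 (by push_cast; linarith)
      omega
  have hr : ∀ n, qgRem x (val x c) n = val x (sh n c) := by
    intro n
    induction n with
    | zero => rw [sh_zero]; rfl
    | succ n ih =>
      rw [qgRem, ih, key n]
      linarith [val_step hx hc n]
  funext n
  rw [quasiGreedy, hr, key]

/-- A sequence lying below `d` together with its tails following digits below `M` has value at
most `1`, provided `d` has value at most `1`. -/
theorem val_le_one {M : ℕ} {x : ℝ} (h : Base M x) {d : ℕ → ℕ} (hd : ∀ i, d i ≤ M)
    (hd1 : val x d ≤ 1) {e : ℕ → ℕ} (he : ∀ i, e i ≤ M) (hed : lexLe e d)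
    (ht : ∀ n, e n < M → lexLe (sh (n + 1) e) d) : val x e ≤ 1 := by
  have hx := h.one_lt
  have hx0 : 0 < x := by linarith
  have key : ∀ N : ℕ, ∀ e : ℕ → ℕ, (∀ i, e i ≤ M) → lexLe e d →
      (∀ n, e n < M → lexLe (sh (n + 1) e) d) → val x e - 1 ≤ M / (x - 1) / x ^ N := by
    intro N
    have hM : (0 : ℝ) ≤ M / (x - 1) := by linarith [h.one_le_top]
    induction N with
    | zero =>
      intro e he _ _
      have := val_le hx he
      simp; linarith
    | succ N ih =>
      intro e he hed ht
      rcases hed with ⟨n, h1, h2⟩ | rfl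
      · have hn : e n < M := h2.trans_le (hd n)
        have h3 := ih (sh (n + 1) e) (sh_le he _) (ht n hn) (fun k hk => by
          have := ht (n + 1 + k) hk
          rw [sh_sh]; exact this)
        have h4 := val_sub hx he hd n h1
        have h5 := val_step hx he n
        have h6 := val_step hx hd n
        have h7 := val_nonneg hx (sh (n + 1) d)
        have h8 : (e n : ℝ) + 1 ≤ d n := by exact_mod_cast h2
        have h9 : x * (val x (sh n e) - val x (sh n d)) ≤ val x (sh (n + 1) e) - 1 := by linarith
        have h10 : val x (sh n e) - val x (sh n d) ≤ (M / (x - 1) / x ^ N) / x := by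
          rw [le_div_iff₀ hx0]; linarith
        have h11 : (1 : ℝ) ≤ x ^ n := one_le_pow₀ hx.le
        have h12 : val x e - val x d ≤ (M / (x - 1) / x ^ N) / x := by
          rw [h4]
          have h13 : 0 ≤ (M / (x - 1) / x ^ N) / x := by positivity
          rw [div_le_iff₀ (by positivity)]
          nlinarith
        rw [pow_succ, ← div_div]; linarith
      · have : (0 : ℝ) ≤ M / (x - 1) / x ^ (N + 1) := by positivity
        linarith
  have h0 : Filter.Tendsto (fun n : ℕ => (M : ℝ) / (x - 1) / x ^ n) Filter.atTop (nhds 0) :=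
    Filter.Tendsto.const_div_atTop (tendsto_pow_atTop_atTop_of_one_lt hx) _
  have := ge_of_tendsto' h0 (fun N => key N e he hed ht)
  linarith

theorem val_lt_one {M : ℕ} {x : ℝ} (h : Base M x) {d : ℕ → ℕ} (hd : ∀ i, d i ≤ M)
    (hinf : InfiniteSeq d) (hd1 : val x d ≤ 1) {e : ℕ → ℕ} (he : ∀ i, e i ≤ M) (hed : lexLt e d)
    (ht : ∀ n, e n < M → lexLe (sh (n + 1) e) d) : val x e < 1 := by
  have hx := h.one_lt
  have hx0 : 0 < x := by linarith
  obtain ⟨n, h1, h2⟩ := hed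
  have hn : e n < M := h2.trans_le (hd n)
  have h3 := val_le_one h hd hd1 (sh_le he (n + 1)) (ht n hn) (fun k hk => by
    have := ht (n + 1 + k) hk
    rw [sh_sh]; exact this)
  have h4 := val_sub hx he hd n h1
  have h5 := val_step hx he n
  have h6 := val_step hx hd n
  have h7 := val_pos_of_infinite hx hd hinf (n + 1)
  have h8 : (e n : ℝ) + 1 ≤ d n := by exact_mod_cast h2
  have h9 : val x (sh n e) - val x (sh n d) < 0 := by nlinarith
  have : val x e - val x d < 0 := by
    rw [h4]; exact div_neg_of_neg_of_pos h9 (by positivity)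
  linarith

/-! ### The quasi-greedy expansion of `1` -/

section alpha

variable {M : ℕ} {x : ℝ}

theorem alpha_le (h : Base M x) (i : ℕ) : alphaSeq x i ≤ M := quasiGreedy_le h 1 i

theorem alpha_val (h : Base M x) : val x (alphaSeq x) = 1 :=
  val_quasiGreedy h one_pos h.one_le_top

theorem alpha_inf (h : Base M x) : InfiniteSeq (alphaSeq x) :=
  quasiGreedy_infinite h one_pos h.one_le_top

theorem alpha_zero (h : Base M x) : alphaSeq x 0 = M := by
  rw [alphaSeq, quasiGreedy, qgRem, qgDigit, h.top, mul_one, h.ceil]; omega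

theorem alpha_shift (h : Base M x) (k : ℕ) : lexLe (sh k (alphaSeq x)) (alphaSeq x) := by
  have h1 := qgRem_pos h one_pos h.one_le_top k
  have e : sh k (alphaSeq x) = quasiGreedy x (qgRem x 1 k) := sh_quasiGreedy x 1 k
  rw [e]
  refine le_quasiGreedy h (quasiGreedy_le h _) (quasiGreedy_infinite h h1.1 h1.2) ?_
  rw [val_quasiGreedy h h1.1 h1.2]
  exact qgRem_le_one h k

theorem alpha_unique (h : Base M x) {c : ℕ → ℕ} (hc : ∀ i, c i ≤ M) (hinf : InfiniteSeq c)
    (hs : ∀ k, lexLe (sh k c) c) (hv : val x c = 1) : alphaSeq x = c := by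
  have := eq_quasiGreedy h hc hinf (fun n _ => val_le_one h hc hv.le (sh_le hc (n + 1)) (hs _)
    (fun k _ => by rw [sh_sh]; exact hs _))
  rwa [hv] at this

theorem alpha_mono {y : ℝ} (h : Base M x) (h' : Base M y) (hxy : x < y) :
    lexLt (alphaSeq x) (alphaSeq y) := by
  obtain ⟨j, -, hj⟩ := alpha_inf h 0
  have h1 := val_anti h.one_lt hxy (alpha_le h) hj
  rw [alpha_val h] at h1
  rcases le_quasiGreedy h' (alpha_le h) (alpha_inf h) h1.le with h2 | h2
  · exact h2
  · have h3 := alpha_val h'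
    change alphaSeq x = alphaSeq y at h2
    rw [← h2] at h3
    linarith

theorem base_lt_of_lex {y : ℝ} (h : Base M x) (h' : Base M y)
    (hl : lexLt (alphaSeq x) (alphaSeq y)) : x < y := by
  rcases lt_trichotomy x y with h1 | h1 | h1
  · exact h1
  · rw [h1] at hl; exact (lexLt_irrefl _ hl).elim
  · exact (lexLt_irrefl _ (lexLt_trans hl (alpha_mono h' h h1))).elim

theorem base_le_of_lex {y : ℝ} (h : Base M x) (h' : Base M y)
    (hl : lexLe (alphaSeq x) (alphaSeq y)) : x ≤ y := by
  by_contra hc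
  exact not_lexLe.2 (alpha_mono h' h (not_le.1 hc)) hl

theorem alpha_inj {y : ℝ} (h : Base M x) (h' : Base M y) (he : alphaSeq x = alphaSeq y) : x = y :=
  le_antisymm (base_le_of_lex h h' (Or.inr he)) (base_le_of_lex h' h (Or.inr he.symm))

/-- Every infinite sequence starting with `M` and dominating its shifts is the quasi-greedy expansion
of `1` in some base with top digit `M`. -/
theorem exists_base (hM : 1 ≤ M) {c : ℕ → ℕ} (hc : ∀ i, c i ≤ M) (h0 : c 0 = M)
    (hinf : InfiniteSeq c) (hs : ∀ k, lexLe (sh k c) c) : ∃ t, Base M t ∧ alphaSeq t = c := by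
  have hM' : (1 : ℝ) ≤ M := by exact_mod_cast hM
  obtain ⟨j, hj, hcj⟩ := hinf 1
  -- A base slightly above `M` in which the value of `c` exceeds `1`.
  obtain ⟨a, ha1, ha2, ha3⟩ : ∃ a : ℝ, (M : ℝ) < a ∧ a < M + 1 ∧ 1 < val a c := by
    have hcont : ContinuousAt (fun y : ℝ => (M : ℝ) / y + 1 / y ^ (j + 1)) M := by
      have : (M : ℝ) ≠ 0 := by linarith
      fun_prop (disch := positivity)
    have hval : (1 : ℝ) < (M : ℝ) / M + 1 / (M : ℝ) ^ (j + 1) := by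
      rw [div_self (by linarith)]
      have : (0 : ℝ) < 1 / (M : ℝ) ^ (j + 1) := by positivity
      linarith
    have hev := (hcont.eventually (lt_mem_nhds hval)).filter_mono
      (nhdsWithin_le_nhds (s := Set.Ioi (M : ℝ)))
    have hev2 : ∀ᶠ y in nhdsWithin (M : ℝ) (Set.Ioi M), y ∈ Set.Ioo (M : ℝ) (M + 1) :=
      Ioo_mem_nhdsGT (by linarith)
    obtain ⟨a, h1, h2⟩ := (hev.and hev2).exists
    refine ⟨a, h2.1, h2.2, h1.trans_le ?_⟩
    have ha : 1 < a := by linarith [h2.1]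
    have hcj' : (1 : ℝ) ≤ c j := by exact_mod_cast Nat.pos_of_ne_zero hcj
    have := (summ ha hc).sum_le_tsum {0, j} (fun i _ => digit_term_nonneg ha c i)
    rw [Finset.sum_pair (by omega), h0] at this
    refine le_trans ?_ this
    rw [zero_add, pow_one]
    gcongr
  have hb : val (M + 1 : ℝ) c ≤ 1 := by
    have := val_le (x := (M : ℝ) + 1) (by linarith) hc
    rwa [show (M : ℝ) + 1 - 1 = M by ring, div_self (by linarith)] at this
  have ha : 1 < a := by linarith
  have hcont : ContinuousOn (fun y => val y c) (Set.Icc a (M + 1)) := by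
    refine continuousOn_tsum (u := fun i : ℕ => (M : ℝ) / a ^ (i + 1)) (fun i => ?_)
      (hasSum_const ha M).summable (fun i y hy => ?_)
    · refine continuousOn_const.div (continuousOn_pow _) (fun y hy => ?_)
      have : 0 < y := by linarith [hy.1]
      positivity
    · have hy1 : a ≤ y := hy.1
      have hy2 : 1 < y := by linarith
      rw [Real.norm_of_nonneg (digit_term_nonneg hy2 c i)]
      have : (c i : ℝ) ≤ M := by exact_mod_cast hc i
      gcongr
  obtain ⟨t, ht1, ht2⟩ := intermediate_value_Icc' ha2.le hcont ⟨hb, ha3.le⟩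
  have ht : Base M t := ⟨hM, by linarith [ht1.1], ht1.2⟩
  exact ⟨t, ht, alpha_unique ht hc hinf hs ht2⟩

theorem Adm.exists_base (hM : 1 ≤ M) {c : ℕ → ℕ} (h : Adm M c) :
    ∃ t, Base M t ∧ alphaSeq t = c :=
  _root_.exists_base hM h.le h.zero (h.infinite hM) h.shift

/-- Bases whose expansions of `1` agree with that of `x` on a long prefix are close to `x`. -/
theorem base_near (h : Base M x) {ε : ℝ} (hε : 0 < ε) :
    ∃ m, ∀ y, Base M y → (∀ i, i < m → alphaSeq y i = alphaSeq x i) → |y - x| < ε := by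
  have hx := h.one_lt
  obtain ⟨j, -, hj⟩ := alpha_inf h 0
  have hb : max (x - ε) ((1 + x) / 2) < x := max_lt (by linarith) (by linarith)
  have ha1 : 1 < max (x - ε) ((1 + x) / 2) := lt_max_of_lt_right (by linarith)
  have hae : x - ε ≤ max (x - ε) ((1 + x) / 2) := le_max_left _ _
  generalize max (x - ε) ((1 + x) / 2) = a at hb ha1 hae
  have va := val_anti ha1 hb (alpha_le h) hj
  have vb := val_anti hx (show x < x + ε by linarith) (alpha_le h) hj
  rw [alpha_val h] at va vb
  obtain ⟨m1, hm1⟩ := val_near ha1 (M := M) (sub_pos.2 va)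
  obtain ⟨m2, hm2⟩ := val_near (show 1 < x + ε by linarith) (M := M) (sub_pos.2 vb)
  refine ⟨max m1 m2, fun y hy hag => ?_⟩
  have e1 := hm1 _ _ (alpha_le hy) (alpha_le h) (fun i hi => hag i (lt_max_of_lt_left hi))
  have e2 := hm2 _ _ (alpha_le hy) (alpha_le h) (fun i hi => hag i (lt_max_of_lt_right hi))
  rw [abs_lt] at e1 e2 ⊢
  obtain ⟨j', -, hj'⟩ := alpha_inf hy 0
  constructor
  · by_contra hc
    have hya : y ≤ a := by linarith
    rcases hya.eq_or_lt with h1 | h1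
    · have := alpha_val hy
      rw [h1] at this e1; linarith [e1.1]
    · have := val_anti hy.one_lt h1 (alpha_le hy) hj'
      rw [alpha_val hy] at this; linarith [e1.1]
  · by_contra hc
    have hya : x + ε ≤ y := by linarith
    rcases hya.eq_or_lt with h1 | h1
    · have := alpha_val hy
      rw [← h1] at this e2; linarith [e2.2]
    · have := val_anti (by linarith) h1 (alpha_le hy) hj'
      rw [alpha_val hy] at this; linarith [e2.2]

/-! ### Lexicographic characterizations -/

theorem isExpansion_iff (h : Base M x) {c : ℕ → ℕ} {y : ℝ} :
    IsExpansion x c y ↔ (∀ i, c i ≤ M) ∧ y = val x c := by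
  unfold IsExpansion
  simp only [h.digit_iff]
  rfl

/-- A quasi-greedy expansion has its tails after digits below `M` bounded by that of `1`. -/
theorem quasiGreedy_tail (h : Base M x) {y : ℝ} (hy0 : 0 ≤ y) (hy : y ≤ M / (x - 1)) {n : ℕ}
    (hn : quasiGreedy x y n < M) : lexLe (sh (n + 1) (quasiGreedy x y)) (alphaSeq x) := by
  rcases hy0.eq_or_lt with rfl | h0
  · rw [quasiGreedy_zero]
    left; apply lexLt_of_head
    rw [alpha_zero h]; exact h.one_le
  · have h1 := qgRem_pos h h0 hy (n + 1)
    have h2 := qgRem_pos h h0 hy n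
    rw [sh_quasiGreedy]
    refine le_quasiGreedy h (quasiGreedy_le h _) (quasiGreedy_infinite h h1.1 h1.2) ?_
    rw [val_quasiGreedy h h1.1 h1.2]
    exact (qg_step h h2.1 h2.2).2.2 (Or.inl hn)

theorem useq_tail_lt (h : Base M x) {c : ℕ → ℕ} (hc : c ∈ USeq x) {n : ℕ} (hn : c n < M) :
    lexLt (sh (n + 1) c) (alphaSeq x) := by
  obtain ⟨y, hy, huniq⟩ := hc
  rw [isExpansion_iff h] at hy
  obtain ⟨hcM, rfl⟩ := hy
  have hx := h.one_lt
  have hq : quasiGreedy x (val x c) = c := huniq _ ((isExpansion_iff h).2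
    ⟨quasiGreedy_le h _, (val_quasiGreedy' h (val_nonneg hx c) (val_le hx hcM)).symm⟩)
  have h1 := quasiGreedy_tail h (val_nonneg hx c) (val_le hx hcM) (n := n) (by rwa [hq])
  rw [hq] at h1
  rcases h1 with h1 | h1
  · exact h1
  · exfalso
    -- Replacing `c_n α(x)` by `(c_n + 1) 0^∞` gives a second expansion.
    let c' : ℕ → ℕ := fun i => if i < n then c i else if i = n then c n + 1 else 0
    have hc' : ∀ i, c' i ≤ M := fun i => by
      simp only [c']; split_ifs
      · exact hcM i
      · exact hn
      · exact Nat.zero_le _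
    have hcn : c' n = c n + 1 := by simp [c']
    have e1 := val_sub hx hc' hcM n (fun i hi => by simp [c', hi])
    have e2 := val_step hx hc' n
    have e3 := val_step hx hcM n
    rw [h1, alpha_val h] at e3
    rw [show sh (n + 1) c' = fun _ => 0 from funext fun i => by
      simp [c', sh, show ¬ (n + 1 + i < n) by omega, show ¬ (n + 1 + i = n) by omega],
      val_zero, hcn] at e2
    push_cast at e2
    have e4 : val x (sh n c') - val x (sh n c) = 0 := by
      have : x * (val x (sh n c') - val x (sh n c)) = 0 := by linarith
      rcases mul_eq_zero.1 this with h | h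
      · linarith
      · exact h
    rw [e4, zero_div] at e1
    have := huniq c' ((isExpansion_iff h).2 ⟨hc', by linarith⟩)
    rw [this] at hcn
    omega

theorem useq_le (h : Base M x) {c : ℕ → ℕ} (hc : c ∈ USeq x) (i : ℕ) : c i ≤ M := by
  obtain ⟨y, hy, _⟩ := hc
  exact ((isExpansion_iff h).1 hy).1 i

theorem useq_rf (h : Base M x) {c : ℕ → ℕ} (hc : c ∈ USeq x) : rf M c ∈ USeq x := by
  have hcM := useq_le h hc
  obtain ⟨y, hy, huniq⟩ := hc
  rw [isExpansion_iff h] at hy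
  obtain ⟨-, rfl⟩ := hy
  have hx := h.one_lt
  refine ⟨_, (isExpansion_iff h).2 ⟨rf_le M c, rfl⟩, fun d hd => ?_⟩
  rw [isExpansion_iff h, val_rf hx hcM] at hd
  have := huniq (rf M d) ((isExpansion_iff h).2 ⟨rf_le M d, by rw [val_rf hx hd.1]; linarith [hd.2]⟩)
  rw [← this, rf_rf hd.1]

/-- Among sequences of equal value, one whose tails after digits below `M` are `< α(x)` is not
exceeded. -/
theorem not_lexLt_of_tail (h : Base M x) {c d : ℕ → ℕ} (hc : ∀ i, c i ≤ M) (hd : ∀ i, d i ≤ M)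
    (ht : ∀ n, c n < M → lexLt (sh (n + 1) c) (alphaSeq x)) (hv : val x c = val x d) :
    ¬ lexLt c d := by
  rintro ⟨n, h1, h2⟩
  have hx := h.one_lt
  have hlt := val_lt_one h (alpha_le h) (alpha_inf h) (alpha_val h).le (sh_le hc (n + 1))
    (ht n (h2.trans_le (hd n))) (fun k hk => by rw [sh_sh]; exact Or.inl (ht (n + 1 + k) hk))
  have e1 := val_sub hx hc hd n h1
  rw [hv, sub_self, eq_comm, div_eq_zero_iff] at e1
  have hp : x ^ n ≠ 0 := by positivity
  have e2 := e1.resolve_right hp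
  have e3 := val_step hx hc n
  have e4 := val_step hx hd n
  have e5 := val_nonneg hx (sh (n + 1) d)
  have e6 : (c n : ℝ) + 1 ≤ d n := by exact_mod_cast h2
  have e7 : val x (sh n c) = val x (sh n d) := by linarith
  rw [e7] at e3
  linarith

theorem useq_iff (h : Base M x) {c : ℕ → ℕ} : c ∈ USeq x ↔ (∀ i, c i ≤ M) ∧
    (∀ n, c n < M → lexLt (sh (n + 1) c) (alphaSeq x)) ∧
    (∀ n, 0 < c n → lexLt (rf M (sh (n + 1) c)) (alphaSeq x)) := by
  constructor
  · intro hc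
    refine ⟨useq_le h hc, fun n hn => useq_tail_lt h hc hn, fun n hn => ?_⟩
    have := useq_le h hc n
    exact useq_tail_lt h (useq_rf h hc) (n := n) (by simp only [rf]; omega)
  · rintro ⟨hc, h1, h2⟩
    have hx := h.one_lt
    refine ⟨_, (isExpansion_iff h).2 ⟨hc, rfl⟩, fun d hd => ?_⟩
    rw [isExpansion_iff h] at hd
    rcases lex_tri d c with h3 | h3 | h3
    · exfalso
      refine not_lexLt_of_tail h (rf_le M c) (rf_le M d) (fun n hn => ?_) ?_ (lexLt_rf hc h3)
      · exact h2 n (by have := hc n; simp only [rf] at hn; omega)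
      · rw [val_rf hx hc, val_rf hx hd.1, hd.2]
    · exact h3
    · exact (not_lexLt_of_tail h hc hd.1 h1 hd.2 h3).elim

theorem vbases_iff (h : Base M x) : x ∈ VBases ↔ Adm M (alphaSeq x) := by
  constructor
  · rintro ⟨-, h1⟩
    rw [h.top] at h1
    refine ⟨alpha_le h, alpha_zero h, alpha_shift h, fun k => ?_⟩
    rcases Nat.eq_zero_or_pos k with rfl | hk
    · left; apply lexLt_of_head
      have := h.one_le
      simp only [rf, sh, alpha_zero h]
      omega
    · exact h1 k hk
  · intro h1
    refine ⟨h.one_lt, fun k _ => ?_⟩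
    rw [h.top]; exact h1.refl k

theorem StrictAdm.univ (h : Base M x) (hs : StrictAdm M (alphaSeq x)) : x ∈ UnivBases := by
  have hmem : alphaSeq x ∈ USeq x := (useq_iff h).2
    ⟨alpha_le h, fun n _ => hs.shift _ (by omega), fun n _ => hs.refl _ (by omega)⟩
  obtain ⟨y, hy, hu⟩ := hmem
  have : y = 1 := by rw [((isExpansion_iff h).1 hy).2, alpha_val h]
  subst this
  exact ⟨h.one_lt, alphaSeq x, hy, hu⟩

theorem strictAdm_of_univ (h : Base M x) (hx1 : x < M + 1) (hx : x ∈ UnivBases) :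
    StrictAdm M (alphaSeq x) := by
  obtain ⟨-, c, hc, hu⟩ := hx
  have hα : IsExpansion x (alphaSeq x) 1 := (isExpansion_iff h).2 ⟨alpha_le h, (alpha_val h).symm⟩
  have hmem : alphaSeq x ∈ USeq x := ⟨1, hα, fun c' hc' => (hu c' hc').trans (hu _ hα).symm⟩
  obtain ⟨-, h1, h2⟩ := (useq_iff h).1 hmem
  refine ⟨alpha_le h, alpha_zero h, ?_, ?_⟩
  · refine upgrade_lt (alpha_le h) (alpha_zero h) (alpha_shift h 1) h1 ?_
    rcases alpha_shift h 1 with h3 | h3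
    · exact h3
    · exfalso
      -- A fixed point of the shift is constant, and the base of `M^∞` is `M + 1`.
      have hconst : ∀ i, alphaSeq x i = M := by
        intro i
        induction i with
        | zero => exact alpha_zero h
        | succ i ih => rw [← ih, ← congrFun h3 i, sh, add_comm]
      have hv := alpha_val h
      have hval : val x (alphaSeq x) = M / (x - 1) := by
        rw [val, ← (hasSum_const h.one_lt (M : ℝ)).tsum_eq]
        congr 1; funext i; rw [hconst]
      rw [hval, div_eq_one_iff_eq (by linarith [h.one_lt])] at hv
      linarith
  · intro k _
    refine upgrade_lt (M := M) (y := rf M (alphaSeq x)) (k₀ := 0) (rf_le _ _) (alpha_zero h)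
      (alpha_shift h 1) (fun n hn => ?_) ?_ k (Nat.zero_le _)
    · exact h2 n (by have := alpha_le h n; simp only [rf] at hn; omega)
    · apply lexLt_of_head
      have := h.one_le
      simp only [rf, sh, alpha_zero h]
      omega

/-- A base of `𝒱` outside the closure of `𝒰` has a self-reflecting expansion of `1`. -/
theorem exists_refl_eq (h : Base M x) (hV : x ∈ VBases) (hU : x ∉ closure UnivBases) :
    ∃ k, 1 ≤ k ∧ rf M (sh k (alphaSeq x)) = alphaSeq x := by
  by_contra hc
  push Not at hc
  have hA := (vbases_iff h).1 hV
  apply hU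
  rw [Metric.mem_closure_iff]
  intro ε hε
  obtain ⟨m, hm⟩ := base_near h hε
  obtain ⟨g, hg, hag⟩ := hA.approx h.one_le (fun k hk => (hA.refl k).resolve_right (hc k hk)) m
  obtain ⟨t, ht, rfl⟩ := hg.adm.exists_base h.one_le
  refine ⟨t, hg.univ ht, ?_⟩
  rw [dist_comm, Real.dist_eq]
  exact hm t ht hag

/-- A non-integer univoque base is a limit of larger univoque bases. -/
theorem exists_univ_right (h : Base M x) (hx1 : x < M + 1) (hU : x ∈ UnivBases) {r : ℝ}
    (hr : x < r) : ∃ t ∈ UnivBases, x < t ∧ t < r := by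
  obtain ⟨m, hm⟩ := base_near h (sub_pos.2 hr)
  obtain ⟨g, hg, hlt, hag⟩ := (strictAdm_of_univ h hx1 hU).approx_right h.one_le m
  obtain ⟨t, ht, rfl⟩ := hg.adm.exists_base h.one_le
  exact ⟨t, hg.univ ht, base_lt_of_lex h ht hlt, by linarith [(abs_lt.1 (hm t ht hag)).2]⟩

end alpha

/-! ### Compactness of the sequence space -/

theorem isCompact_digits (M : ℕ) : IsCompact {c : ℕ → ℕ | ∀ i, c i ≤ M} := by
  have := isCompact_univ_pi (X := fun _ : ℕ => ℕ) (s := fun _ => Set.Iic M)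
    (fun _ => (Set.finite_Iic M).isCompact)
  convert this using 1
  ext c; simp [Pi.le_def]

theorem agree_mem_nhds (d : ℕ → ℕ) (n : ℕ) : {c : ℕ → ℕ | ∀ i, i < n → c i = d i} ∈ nhds d := by
  have := set_pi_mem_nhds (x := d) (s := fun i => {d i}) (Set.finite_lt_nat n)
    (fun i _ => (isOpen_discrete ({d i} : Set ℕ)).mem_nhds rfl)
  refine Filter.mem_of_superset this fun c hc i hi => ?_
  exact hc i hi

theorem val_strictMono_lex {M : ℕ} {c d : ℕ → ℕ} (hc : ∀ i, c i ≤ M) (hd : ∀ i, d i ≤ M)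
    (h : lexLt c d) : val (M + 2) c < val (M + 2) d := by
  have hM : (0 : ℝ) ≤ M := Nat.cast_nonneg M
  have hx : (1 : ℝ) < M + 2 := by linarith
  obtain ⟨n, h1, h2⟩ := h
  have e1 := val_sub hx hc hd n h1
  have e2 := val_step hx hc n
  have e3 := val_step hx hd n
  have e4 := val_le hx (sh_le hc (n + 1))
  have e5 := val_nonneg hx (sh (n + 1) d)
  have e6 : (c n : ℝ) + 1 ≤ d n := by exact_mod_cast h2
  have e7 : (M : ℝ) / (M + 2 - 1) < 1 := by rw [div_lt_one (by linarith)]; linarith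
  have e8 : val (M + 2 : ℝ) (sh n c) - val (M + 2 : ℝ) (sh n d) < 0 := by nlinarith
  have : val (M + 2 : ℝ) c - val (M + 2 : ℝ) d < 0 := by
    rw [e1]; exact div_neg_of_neg_of_pos e8 (by positivity)
  linarith

/-- A nonempty set of sequences over `{0, …, M}` has a lexicographic supremum, which lies in its
closure. -/
theorem exists_lexSup {M : ℕ} {T : Set (ℕ → ℕ)} (hT : T.Nonempty) (hle : ∀ d ∈ T, ∀ i, d i ≤ M) :
    ∃ b : ℕ → ℕ, (∀ i, b i ≤ M) ∧ (∀ d ∈ T, lexLe d b) ∧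
      ∀ n, ∃ d ∈ T, ∀ i, i < n → d i = b i := by
  have hM : (0 : ℝ) ≤ M := Nat.cast_nonneg M
  have hx : (1 : ℝ) < M + 2 := by linarith
  have hsub : closure T ⊆ {c : ℕ → ℕ | ∀ i, c i ≤ M} :=
    closure_minimal hle (isCompact_digits M).isClosed
  have hcomp : IsCompact (closure T) := (isCompact_digits M).of_isClosed_subset isClosed_closure hsub
  -- In base `M + 2` the value is continuous and strictly increasing on this alphabet.
  have hcont : ContinuousOn (fun c : ℕ → ℕ => val (M + 2) c) (closure T) := by
    refine continuousOn_tsum (u := fun i : ℕ => (M : ℝ) / (M + 2 : ℝ) ^ (i + 1)) (fun i => ?_)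
      (hasSum_const hx M).summable (fun i c hc => ?_)
    · refine ContinuousOn.div_const (Continuous.continuousOn ?_) _
      exact (continuous_of_discreteTopology (f := fun n : ℕ => (n : ℝ))).comp (continuous_apply i)
    · rw [Real.norm_of_nonneg (digit_term_nonneg hx c i)]
      exact digit_term_le hx (hsub hc) i
  obtain ⟨b, hb, hmax⟩ := hcomp.exists_isMaxOn hT.closure hcont
  refine ⟨b, hsub hb, fun d hd => ?_, fun n => ?_⟩
  · by_contra hc
    have h1 := val_strictMono_lex (hsub hb) (hle d hd) (not_lexLe.1 hc)
    have h2 := hmax (subset_closure hd)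
    simp only [Set.mem_ofPred_eq] at h2
    linarith
  · obtain ⟨d, hd1, hd2⟩ := mem_closure_iff_nhds.1 hb _ (agree_mem_nhds b n)
    exact ⟨d, hd2, hd1⟩

/-! ### Finiteness of `[q, r) ∩ 𝒱` and the decomposition -/

/-- A base of `𝒱` outside `𝒰` has a periodic expansion of `1`. -/
theorem exists_period {M : ℕ} {x : ℝ} (h : Base M x) (hV : x ∈ VBases) (hU : x ∉ UnivBases) :
    ∃ p, 1 ≤ p ∧ sh p (alphaSeq x) = alphaSeq x := by
  by_contra hc
  push Not at hc
  have hA := (vbases_iff h).1 hV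
  refine hU (StrictAdm.univ h ⟨hA.le, hA.zero, fun k hk => (hA.shift k).resolve_right (hc k hk),
    fun k hk => (hA.refl k).resolve_right fun he => hc (k + k) (by omega) ?_⟩)
  rw [← sh_sh]
  have h1 : sh k (alphaSeq x) = rf M (alphaSeq x) := by
    rw [← rf_rf (sh_le hA.le k), he]
  rw [h1, sh_rf, he]

/-- An accumulation point of the sequences `α(s)`, `s ∈ [q, r) ∩ 𝒱`, would be some `α(t)` with
`t ∈ [q, r] ∩ 𝒱`. No such `s` accumulates at `t` from below, because `α(t)` equals one of its
reflected shifts, nor from above, because `α(t)` is periodic. -/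
theorem vbases_finite {M : ℕ} {q r : ℝ} (hbase : ∀ t ∈ Set.Icc q r, Base M t)
    (hcl : ∀ t, q < t → t ≤ r → t ∉ closure UnivBases)
    (hnU : ∀ t, q ≤ t → t < r → t ∉ UnivBases) : (Set.Ico q r ∩ VBases).Finite := by
  by_contra hinf
  have hSb : ∀ s ∈ Set.Ico q r ∩ VBases, Base M s := fun s hs => hbase s ⟨hs.1.1, hs.1.2.le⟩
  have hinj : Set.InjOn alphaSeq (Set.Ico q r ∩ VBases) :=
    fun s hs s' hs' he => alpha_inj (hSb s hs) (hSb s' hs') he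
  have himg : (alphaSeq '' (Set.Ico q r ∩ VBases)).Infinite := Set.Infinite.image hinj hinf
  obtain ⟨d, hd, hacc⟩ := himg.exists_accPt_of_subset_isCompact (isCompact_digits M) (by
    rintro _ ⟨s, hs, rfl⟩ i
    exact alpha_le (hSb s hs) i)
  rw [accPt_iff_nhds] at hacc
  have happ : ∀ n, ∃ s ∈ Set.Ico q r ∩ VBases, alphaSeq s ≠ d ∧ ∀ i, i < n → alphaSeq s i = d i := by
    intro n
    obtain ⟨_, ⟨h1, s, hs, rfl⟩, h2⟩ := hacc _ (agree_mem_nhds d n)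
    exact ⟨s, hs, h2, h1⟩
  obtain ⟨s₀, hs₀, -, hs₀1⟩ := happ 1
  have hM : 1 ≤ M := (hSb s₀ hs₀).one_le
  have hdA : Adm M d := by
    refine ⟨hd, by rw [← hs₀1 0 one_pos, alpha_zero (hSb s₀ hs₀)], fun k => ?_, fun k => ?_⟩
    · by_contra hc
      obtain ⟨m, hm⟩ := lexLt_open (not_lexLe.1 hc)
      obtain ⟨s, hs, -, hag⟩ := happ (k + m)
      refine not_lexLe.2 (hm (alphaSeq s) (sh k (alphaSeq s)) (fun i hi => hag i (by omega))
        (fun i hi => hag (k + i) (by omega))) (alpha_shift (hSb s hs) k)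
    · by_contra hc
      obtain ⟨m, hm⟩ := lexLt_open (not_lexLe.1 hc)
      obtain ⟨s, hs, -, hag⟩ := happ (k + m)
      refine not_lexLe.2 (hm (alphaSeq s) (rf M (sh k (alphaSeq s))) (fun i hi => hag i (by omega))
        (fun i hi => ?_)) (((vbases_iff (hSb s hs)).1 hs.2).refl k)
      simp only [rf, sh]; rw [hag (k + i) (by omega)]
  obtain ⟨t, ht, rfl⟩ := hdA.exists_base hM
  have htV : t ∈ VBases := (vbases_iff ht).2 hdA
  have hqt : q ≤ t := by
    by_contra hc
    obtain ⟨m, hm⟩ := base_near ht (sub_pos.2 (not_le.1 hc))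
    obtain ⟨s, hs, -, hag⟩ := happ m
    linarith [(abs_lt.1 (hm s (hSb s hs) hag)).2, hs.1.1]
  have htr : t ≤ r := by
    by_contra hc
    obtain ⟨m, hm⟩ := base_near ht (sub_pos.2 (not_le.1 hc))
    obtain ⟨s, hs, -, hag⟩ := happ m
    linarith [(abs_lt.1 (hm s (hSb s hs) hag)).1, hs.1.2]
  have hleft : ∃ n, ∀ s ∈ Set.Ico q r ∩ VBases, (∀ i, i < n → alphaSeq s i = alphaSeq t i) →
      ¬ lexLt (alphaSeq s) (alphaSeq t) := by
    rcases hqt.eq_or_lt with rfl | hqt'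
    · exact ⟨0, fun s hs _ hlt => absurd (base_lt_of_lex (hSb s hs) ht hlt) (not_lt.2 hs.1.1)⟩
    · obtain ⟨k, hk, he⟩ := exists_refl_eq ht htV (hcl t hqt' htr)
      refine ⟨k, fun s hs hag hlt => ?_⟩
      have hsA := (vbases_iff (hSb s hs)).1 hs.2
      have h1 : lexLt (rf M (alphaSeq t)) (rf M (alphaSeq s)) := lexLt_rf hdA.le hlt
      have h2 := lexLe_rf hsA.le (hsA.refl k)
      rw [rf_rf (sh_le hsA.le k)] at h2
      have h3 := lexLt_of_lt_of_le h1 h2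
      rw [← he, rf_rf (sh_le hdA.le k)] at h3
      exact lexLt_irrefl _ (lexLt_trans hlt (lexLt_cons k (fun i hi => (hag i hi).symm) h3))
  have hright : ∃ n, ∀ s ∈ Set.Ico q r ∩ VBases, (∀ i, i < n → alphaSeq s i = alphaSeq t i) →
      ¬ lexLt (alphaSeq t) (alphaSeq s) := by
    rcases htr.eq_or_lt with rfl | htr'
    · exact ⟨0, fun s hs _ hlt => absurd (base_lt_of_lex ht (hSb s hs) hlt) (not_lt.2 hs.1.2.le)⟩
    · obtain ⟨p, hp, he⟩ := exists_period ht htV (hnU t hqt htr')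
      refine ⟨p, fun s hs hag ⟨j, hj1, hj2⟩ => ?_⟩
      have hjp : p ≤ j := by
        by_contra hc
        have := hag j (by omega)
        omega
      have hper : ∀ i, alphaSeq t (p + i) = alphaSeq t i := fun i => congrFun he i
      -- The first excess over a `p`-periodic sequence reappears `p` places earlier in the shift.
      refine not_lexLe.2 ⟨j - p, fun i hi => ?_, ?_⟩ (alpha_shift (hSb s hs) p)
      · rw [sh, ← hj1 i (by omega), ← hj1 (p + i) (by omega), hper]
      · rw [sh, ← hj1 (j - p) (by omega), ← hper, Nat.add_sub_cancel' hjp]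
        exact hj2
  obtain ⟨n1, hn1⟩ := hleft
  obtain ⟨n2, hn2⟩ := hright
  obtain ⟨s, hs, hne, hag⟩ := happ (max n1 n2)
  rcases lex_tri (alphaSeq s) (alphaSeq t) with h1 | h1 | h1
  · exact hn1 s hs (fun i hi => hag i (lt_max_of_lt_left hi)) h1
  · exact hne h1
  · exact hn2 s hs (fun i hi => hag i (lt_max_of_lt_right hi)) h1

/-- The tails of `c` after digits below `M` and the reflected tails after positive digits: the
sequences that have to be smaller than `α(x)` for `c` to be univoque in base `x`. -/
def tails (M : ℕ) (c : ℕ → ℕ) : Set (ℕ → ℕ) :=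
  {d | ∃ n, (c n < M ∧ d = sh (n + 1) c) ∨ (0 < c n ∧ d = rf M (sh (n + 1) c))}

theorem useq_iff_tails {M : ℕ} {x : ℝ} (h : Base M x) {c : ℕ → ℕ} :
    c ∈ USeq x ↔ (∀ i, c i ≤ M) ∧ ∀ d ∈ tails M c, lexLt d (alphaSeq x) := by
  rw [useq_iff h]
  refine and_congr_right fun _ => ⟨?_, fun h1 => ⟨fun n hn => ?_, fun n hn => ?_⟩⟩
  · rintro ⟨h1, h2⟩ d ⟨n, ⟨hn, rfl⟩ | ⟨hn, rfl⟩⟩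
    · exact h1 n hn
    · exact h2 n hn
  · exact h1 _ ⟨n, Or.inl ⟨hn, rfl⟩⟩
  · exact h1 _ ⟨n, Or.inr ⟨hn, rfl⟩⟩

theorem tails_le {M : ℕ} {c : ℕ → ℕ} (hc : ∀ i, c i ≤ M) : ∀ d ∈ tails M c, ∀ i, d i ≤ M := by
  rintro d ⟨n, ⟨_, rfl⟩ | ⟨_, rfl⟩⟩ i
  · exact hc _
  · exact rf_le _ _ _

theorem tails_shift {M : ℕ} {c : ℕ → ℕ} (hc : ∀ i, c i ≤ M) {d : ℕ → ℕ} (hd : d ∈ tails M c) {k : ℕ}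
    (hk : d k < M) : sh (k + 1) d ∈ tails M c := by
  obtain ⟨n, ⟨_, rfl⟩ | ⟨_, rfl⟩⟩ := hd
  · exact ⟨n + 1 + k, Or.inl ⟨hk, by rw [sh_sh]; rfl⟩⟩
  · refine ⟨n + 1 + k, Or.inr ⟨?_, by rw [sh_rf, sh_sh]; rfl⟩⟩
    have := hc (n + 1 + k)
    simp only [rf, sh] at hk; omega

theorem tails_refl {M : ℕ} {c : ℕ → ℕ} (hc : ∀ i, c i ≤ M) {d : ℕ → ℕ} (hd : d ∈ tails M c) {k : ℕ}
    (hk : 0 < d k) : rf M (sh (k + 1) d) ∈ tails M c := by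
  obtain ⟨n, ⟨_, rfl⟩ | ⟨_, rfl⟩⟩ := hd
  · exact ⟨n + 1 + k, Or.inr ⟨hk, by rw [sh_sh]; rfl⟩⟩
  · refine ⟨n + 1 + k, Or.inl ⟨?_, ?_⟩⟩
    · have := hc (n + 1 + k)
      simp only [rf, sh] at hk; omega
    · rw [sh_rf, sh_sh, rf_rf (sh_le hc _)]; rfl

theorem tails_nonempty {M : ℕ} (hM : 1 ≤ M) (c : ℕ → ℕ) : (tails M c).Nonempty := by
  by_cases h : 0 < c 0
  · exact ⟨_, 0, Or.inr ⟨h, rfl⟩⟩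
  · exact ⟨_, 0, Or.inl ⟨by omega, rfl⟩⟩

/-- The supremum of the tails of `c` is admissible as soon as it starts with `M`. -/
theorem adm_lexSup {M : ℕ} (hM : 1 ≤ M) {c b : ℕ → ℕ} (hc : ∀ i, c i ≤ M) (hb : ∀ i, b i ≤ M)
    (hub : ∀ d ∈ tails M c, lexLe d b) (hlim : ∀ n, ∃ d ∈ tails M c, ∀ i, i < n → d i = b i)
    (hb0 : b 0 = M) : Adm M b := by
  have h1 : ∀ k, b k < M → lexLe (sh (k + 1) b) b := by
    intro k hk
    by_contra hcon
    obtain ⟨m, hm⟩ := lexLt_open (not_lexLe.1 hcon)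
    obtain ⟨d, hd, hag⟩ := hlim (k + 1 + m)
    refine not_lexLe.2 (hm b (sh (k + 1) d) (fun i hi => rfl) (fun i hi => hag _ (by omega)))
      (hub _ (tails_shift hc hd (by rw [hag k (by omega)]; exact hk)))
  have h2 : ∀ k, 0 < b k → lexLe (rf M (sh (k + 1) b)) b := by
    intro k hk
    by_contra hcon
    obtain ⟨m, hm⟩ := lexLt_open (not_lexLe.1 hcon)
    obtain ⟨d, hd, hag⟩ := hlim (k + 1 + m)
    refine not_lexLe.2 (hm b (rf M (sh (k + 1) d)) (fun i hi => rfl) (fun i hi => ?_))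
      (hub _ (tails_refl hc hd (by rw [hag k (by omega)]; exact hk)))
    simp only [rf, sh]; rw [hag _ (by omega)]
  have hs1 : lexLe (sh 1 b) b := by
    -- Otherwise the first index with `b (j+1) > b j` would follow a run of equal digits `M`.
    by_contra hcon
    obtain ⟨j, hj1, hj2⟩ := not_lexLe.1 hcon
    have : ∀ i, i ≤ j → b i = M := by
      intro i hi
      induction i with
      | zero => exact hb0
      | succ i ih =>
        have := hj1 i (by omega)
        rw [sh, add_comm] at this
        rw [← this]; exact ih (by omega)
    have h3 := hb (1 + j)
    rw [this j le_rfl, sh] at hj2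
    omega
  refine ⟨hb, hb0, fun k => ?_, fun k => ?_⟩
  · exact upgrade_le (k₀ := 0) hb hb0 hs1 h1 (by rw [sh_zero]; exact lexLe_refl _) k (Nat.zero_le _)
  · refine upgrade_le (y := rf M b) (k₀ := 0) (rf_le M b) hb0 hs1 (fun n hn => ?_) ?_ k
      (Nat.zero_le _)
    · exact h2 n (by have := hb n; simp only [rf] at hn; omega)
    · left; apply lexLt_of_head
      simp only [rf, sh, hb0]; omega

/-- A sequence univoque in some base with top digit `M`, all of whose tails are at most `α(t)`,
belongs to `𝒱_t'`. -/
theorem mem_vseq {M : ℕ} {t r : ℝ} (ht : Base M t) (hr : Base M r) {c : ℕ → ℕ} (hc : c ∈ USeq r)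
    (hub : ∀ d ∈ tails M c, lexLe d (alphaSeq t)) : c ∈ VSeq t := by
  have hcM := useq_le hr hc
  have hx := ht.one_lt
  have hq : quasiGreedy t (val t c) = c := by
    by_cases hz : c = fun _ => 0
    · rw [hz, val_zero, quasiGreedy_zero]
    · refine eq_quasiGreedy ht hcM ?_ (fun n hn => ?_)
      · intro N
        by_contra hcon
        push Not at hcon
        -- After the last nonzero digit the reflected tail would be `M^∞`.
        have hex : ∃ n, ∀ i, n ≤ i → c i = 0 := ⟨N, hcon⟩
        classical
        have hn := Nat.find_spec hex
        rcases Nat.eq_zero_or_pos (Nat.find hex) with h0 | h0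
        · exact hz (funext fun i => hn i (by omega))
        · obtain ⟨n, hn'⟩ : ∃ n, Nat.find hex = n + 1 := ⟨Nat.find hex - 1, by omega⟩
          have hmin := Nat.find_min hex (m := n) (by omega)
          rw [hn'] at hn
          have hpos : 0 < c n := by
            by_contra h
            refine hmin fun i hi => ?_
            rcases hi.eq_or_lt with rfl | hi
            · omega
            · exact hn i hi
          have h1 := ((useq_iff hr).1 hc).2.2 n hpos
          rw [show rf M (sh (n + 1) c) = fun _ => M from funext fun i => by
            simp [rf, sh, hn (n + 1 + i) (by omega)]] at h1
          obtain ⟨j, _, hj⟩ := h1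
          exact absurd (alpha_le hr j) (not_le.2 hj)
      · refine val_le_one ht (alpha_le ht) (alpha_val ht).le (sh_le hcM _)
          (hub _ ⟨n, Or.inl ⟨hn, rfl⟩⟩) (fun k hk => ?_)
        rw [sh_sh]
        exact hub _ ⟨n + 1 + k, Or.inl ⟨hk, rfl⟩⟩
  refine ⟨val t c, ⟨⟨val_nonneg hx c, ?_⟩, fun n hn => ?_⟩, hq⟩
  · rw [ht.ceil]; push_cast
    rw [add_sub_cancel_right]
    exact val_le hx hcM
  · rw [hq] at hn ⊢
    rw [ht.top]
    exact hub _ ⟨n, Or.inr ⟨hn, rfl⟩⟩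

theorem vseq_subset_useq {M : ℕ} {t r : ℝ} (ht : Base M t) (hr : Base M r) (htr : t < r) :
    VSeq t ⊆ USeq r := by
  rintro _ ⟨x, ⟨⟨hx0, hx1⟩, hV⟩, rfl⟩
  rw [ht.ceil] at hx1
  push_cast at hx1
  rw [add_sub_cancel_right] at hx1
  have hlt := alpha_mono ht hr htr
  refine (useq_iff hr).2 ⟨quasiGreedy_le ht x, fun n hn => ?_, fun n hn => ?_⟩
  · exact lexLt_of_le_of_lt (quasiGreedy_tail ht hx0 hx1 hn) hlt
  · have := hV n hn
    rw [ht.top] at this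
    exact lexLt_of_le_of_lt this hlt

/-- equation (2.1). Let `1 < q < r` with `⌈q⌉ = ⌈r⌉` and
`(q,r] ∩ closure 𝒰 = ∅`. Then `[q,r) ∩ 𝒱` is a finite subset of `𝒱 \ 𝒰` and
`𝒰_r' = 𝒰_q' ∪ ⋃_{t ∈ [q,r) ∩ 𝒱} (𝒱_t' \ 𝒰_t')`. -/
theorem USeq_decomposition (q r : ℝ) (hq : 1 < q) (hqr : q < r) (hceil : ⌈q⌉ = ⌈r⌉)
    (hU : Set.Ioc q r ∩ closure UnivBases = ∅) :
    (Set.Ico q r ∩ VBases).Finite ∧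
    Set.Ico q r ∩ VBases ⊆ VBases \ UnivBases ∧
    USeq r = USeq q ∪ ⋃ t ∈ Set.Ico q r ∩ VBases, (VSeq t \ USeq t) := by
  obtain ⟨M, hbase⟩ : ∃ M, ∀ t ∈ Set.Icc q r, Base M t := by
    refine ⟨topDigit q, fun t ht => ?_⟩
    have h1 := Base.of hq
    have h2 : Base (topDigit q) r := by
      have := Base.of (hq.trans hqr)
      rwa [topDigit, ← hceil, ← topDigit] at this
    exact ⟨h1.one_le, h1.lt.trans_le ht.1, ht.2.trans h2.le⟩
  have hbq : Base M q := hbase q ⟨le_rfl, hqr.le⟩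
  have hbr : Base M r := hbase r ⟨hqr.le, le_rfl⟩
  have hcl : ∀ t, q < t → t ≤ r → t ∉ closure UnivBases := fun t h1 h2 h3 => by
    have : t ∈ Set.Ioc q r ∩ closure UnivBases := ⟨⟨h1, h2⟩, h3⟩
    rw [hU] at this; exact this
  have hnU : ∀ t, q ≤ t → t < r → t ∉ UnivBases := by
    intro t h1 h2 h3
    obtain ⟨s, hs, hs1, hs2⟩ :=
      exists_univ_right (hbase t ⟨h1, h2.le⟩) (h2.trans_le hbr.le) h3 h2
    exact hcl s (h1.trans_lt hs1) hs2.le (subset_closure hs)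
  refine ⟨vbases_finite hbase hcl hnU, fun t ht => ⟨ht.2, hnU t ht.1.1 ht.1.2⟩, ?_⟩
  apply Set.Subset.antisymm
  · intro c hc
    by_cases hcq : c ∈ USeq q
    · exact Or.inl hcq
    right
    have hM := hbq.one_le
    have hcM := useq_le hbr hc
    have hcr := ((useq_iff_tails hbr).1 hc).2
    obtain ⟨b, hb, hub, hlim⟩ := exists_lexSup (tails_nonempty hM c) (tails_le hcM)
    have hnq : ¬ lexLt b (alphaSeq q) := fun h =>
      hcq ((useq_iff_tails hbq).2 ⟨hcM, fun d hd => lexLt_of_le_of_lt (hub d hd) h⟩)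
    have hb0 : b 0 = M := by
      by_contra hne
      refine hnq (lexLt_of_head ?_)
      have := hb 0
      rw [alpha_zero hbq]; omega
    have hbA : Adm M b := adm_lexSup hM hcM hb hub hlim hb0
    obtain ⟨t, ht, rfl⟩ := hbA.exists_base hM
    have htV : t ∈ VBases := (vbases_iff ht).2 hbA
    have hqt : q ≤ t := by
      by_contra h
      exact hnq (alpha_mono ht hbq (not_le.1 h))
    have htr : t ≤ r := by
      refine base_le_of_lex ht hbr ?_
      by_contra h
      obtain ⟨m, hm⟩ := lexLt_open (not_lexLe.1 h)
      obtain ⟨d, hd, hag⟩ := hlim m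
      exact lexLt_irrefl _ (lexLt_trans (hm _ _ (fun _ _ => rfl) hag) (hcr d hd))
    -- Outside the closure of `𝒰` the supremum of the tails is attained.
    have hcUt : c ∉ USeq t := by
      intro hct
      rcases hqt.eq_or_lt with rfl | hqt'
      · exact hcq hct
      obtain ⟨k, hk, he⟩ := exists_refl_eq ht htV (hcl t hqt' htr)
      obtain ⟨k, rfl⟩ : ∃ k', k = k' + 1 := ⟨k - 1, by omega⟩
      obtain ⟨d, hd, hag⟩ := hlim (k + 1)
      have hkpos : 0 < d k := by
        rw [hag k (by omega)]
        by_contra h0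
        have hz : alphaSeq t k = 0 := by omega
        -- A zero digit there would give `M α(t) ≤ α(t)`, hence `α(t) = M^∞`.
        have h1 := hbA.refl k
        have hMe : ∀ i, alphaSeq t i = M := by
          intro i
          induction i using Nat.strong_induction_on with
          | _ i ih =>
            by_contra hne
            refine not_lexLe.2 ⟨i, fun j hj => ?_, ?_⟩ h1
            · rw [ih j hj]
              rcases Nat.eq_zero_or_pos j with rfl | hj0
              · simp [rf, sh, hz]
              · have := congrFun he (j - 1)
                simp only [rf, sh] at this ⊢
                rw [show k + 1 + (j - 1) = k + j by omega, ih (j - 1) (by omega)] at this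
                exact this.symm
            · have hlt : alphaSeq t i < M := lt_of_le_of_ne (hbA.le i) hne
              rcases Nat.eq_zero_or_pos i with rfl | hi0
              · exact absurd hbA.zero hne
              · have := congrFun he (i - 1)
                simp only [rf, sh] at this ⊢
                rw [show k + 1 + (i - 1) = k + i by omega, ih (i - 1) (by omega)] at this
                omega
        have := hMe k
        omega
      have h2 := lexLe_rf hbA.le (hub _ (tails_refl hcM hd hkpos))
      rw [rf_rf (sh_le (tails_le hcM d hd) _)] at h2
      nth_rewrite 1 [← he] at h2
      rw [rf_rf (sh_le hbA.le _)] at h2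
      have h3 := lexLe_cons (k + 1) (fun i hi => (hag i hi).symm) h2
      exact not_lexLe.2 (((useq_iff_tails ht).1 hct).2 d hd) h3
    have htr' : t < r := by
      refine lt_of_le_of_ne htr ?_
      rintro rfl
      exact hcUt hc
    simp only [Set.mem_iUnion]
    exact ⟨t, ⟨⟨hqt, htr'⟩, htV⟩, mem_vseq ht hbr hc hub, hcUt⟩
  · apply Set.union_subset
    · intro c hc
      rw [useq_iff_tails hbq] at hc
      exact (useq_iff_tails hbr).2
        ⟨hc.1, fun d hd => lexLt_trans (hc.2 d hd) (alpha_mono hbq hbr hqr)⟩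
    · refine Set.iUnion₂_subset fun t ht => ?_
      exact Set.sdiff_subset.trans
        (vseq_subset_useq (hbase t ⟨ht.1.1, ht.1.2.le⟩) hbr ht.1.2)
end

section
/- Let q > 1 be a real number and let x ∈ V_q ∖ U_q. Then the quasi-greedy expansion (a_i(x)) of x in base q has a tail equal either to the sequence α_1(q) α_2(q) ... or to its complement α_1(q) α_2(q) ...‾; that is, there exists n ≥ 0 such that a_{n+i}(x) = α_i(q) for all i ≥ 1, or there exists n ≥ 0 such that a_{n+i}(x) = (⌈q⌉ − 1) − α_i(q) for all i ≥ 1. -/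
lemma topDigit_cast {q : ℝ} (hq : 1 < q) : (topDigit q : ℝ) = (⌈q⌉ : ℝ) - 1 := by
  have h1 : 1 < ⌈q⌉ := Int.lt_ceil.mpr (by simpa using hq)
  have h2 : ((topDigit q : ℕ) : ℤ) = ⌈q⌉ - 1 := by unfold topDigit; omega
  exact_mod_cast h2

lemma topDigit_lt {q : ℝ} (hq : 1 < q) : (topDigit q : ℝ) < q := by
  rw [topDigit_cast hq]; linarith [Int.ceil_lt_add_one q]

lemma le_topDigit_add_one {q : ℝ} (hq : 1 < q) : q ≤ topDigit q + 1 := by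
  rw [topDigit_cast hq]; linarith [Int.le_ceil q]

lemma le_topDigit {q : ℝ} {c : ℕ} (hc : (c : ℝ) < q) : c ≤ topDigit q := by
  have : (c : ℤ) < ⌈q⌉ := Int.lt_ceil.mpr (by simpa using hc)
  unfold topDigit; omega

lemma qgDigit_le_s14 (q y : ℝ) : qgDigit q y ≤ topDigit q := min_le_left _ _

lemma qgDigit_lt {q y : ℝ} (h : 0 < q * y) : (qgDigit q y : ℝ) < q * y := by
  have h0 : 0 < ⌈q * y⌉ := Int.ceil_pos.mpr h
  have h1 : qgDigit q y ≤ ⌈q * y⌉.toNat - 1 := min_le_right _ _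
  have h2 : ((qgDigit q y : ℕ) : ℤ) < ⌈q * y⌉ := by omega
  simpa using Int.lt_ceil.mp h2

/-- A quasi-greedy digit smaller than the largest one leaves a remainder at most `1`. -/
lemma rem_le_one {q y : ℝ} (h : qgDigit q y < topDigit q) : q * y - qgDigit q y ≤ 1 := by
  have h1 : ⌈q * y⌉ ≤ (qgDigit q y : ℤ) + 1 := by unfold qgDigit at *; omega
  have h2 : (⌈q * y⌉ : ℝ) ≤ (qgDigit q y : ℝ) + 1 := by exact_mod_cast h1
  linarith [Int.le_ceil (q * y)]

lemma one_le_bound {q : ℝ} (hq : 1 < q) : 1 ≤ (topDigit q : ℝ) / (q - 1) := by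
  rw [le_div_iff₀ (by linarith)]; linarith [le_topDigit_add_one hq]

lemma bound_eq {q : ℝ} (hq : 1 < q) :
    q * ((topDigit q : ℝ) / (q - 1)) = topDigit q + (topDigit q : ℝ) / (q - 1) := by
  have : q - 1 ≠ 0 := by linarith
  field_simp
  ring

lemma qgRem_succ (q x : ℝ) (n : ℕ) :
    qgRem q x (n + 1) = q * qgRem q x n - quasiGreedy q x n := rfl

lemma qgRem_pos_s14 {q x : ℝ} (hq : 1 < q) (hx : 0 < x) (n : ℕ) : 0 < qgRem q x n := by
  induction n with
  | zero => exact hx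
  | succ n ih =>
    have := qgDigit_lt (q := q) (y := qgRem q x n) (by positivity)
    rw [qgRem_succ, quasiGreedy]; linarith

lemma qgRem_nonneg {q x : ℝ} (hq : 1 < q) (hx : 0 ≤ x) (n : ℕ) : 0 ≤ qgRem q x n := by
  rcases hx.eq_or_lt with rfl | hx
  · suffices h : qgRem q 0 n = 0 from h.ge
    induction n with
    | zero => rfl
    | succ n ih => simp [qgRem_succ, quasiGreedy, ih, qgDigit]
  · exact (qgRem_pos_s14 hq hx n).le

lemma qgRem_le {q x : ℝ} (hq : 1 < q) (hx : x ≤ (topDigit q : ℝ) / (q - 1)) (n : ℕ) :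
    qgRem q x n ≤ (topDigit q : ℝ) / (q - 1) := by
  induction n with
  | zero => exact hx
  | succ n ih =>
    rw [qgRem_succ, quasiGreedy]
    rcases (qgDigit_le_s14 q (qgRem q x n)).lt_or_eq with h | h
    · exact (rem_le_one h).trans (one_le_bound hq)
    · rw [h]
      nlinarith [bound_eq hq, mul_le_mul_of_nonneg_left ih (by linarith : (0 : ℝ) ≤ q)]

lemma qgRem_add (q x : ℝ) (n k : ℕ) : qgRem q x (n + k) = qgRem q (qgRem q x n) k := by
  induction k with
  | zero => rfl
  | succ k ih => rw [← add_assoc, qgRem_succ, qgRem_succ, quasiGreedy, quasiGreedy, ih]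

lemma partial_sum {q : ℝ} (hq : 1 < q) (x : ℝ) (n : ℕ) :
    ∑ i ∈ Finset.range n, (quasiGreedy q x i : ℝ) / q ^ (i + 1) + qgRem q x n / q ^ n = x := by
  have hq0 : q ≠ 0 := by linarith
  induction n with
  | zero => simp [qgRem]
  | succ n ih =>
    rw [Finset.sum_range_succ, qgRem_succ]
    have h : (quasiGreedy q x n : ℝ) / q ^ (n + 1)
        + (q * qgRem q x n - quasiGreedy q x n) / q ^ (n + 1) = qgRem q x n / q ^ n := by
      field_simp
      ring
    rw [add_assoc, h, ih]

lemma hasSum_bound {q : ℝ} (hq : 1 < q) (M : ℝ) :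
    HasSum (fun i : ℕ => M / q ^ (i + 1)) (M / (q - 1)) := by
  have h := (hasSum_geometric_of_lt_one (r := q⁻¹) (by positivity)
    (inv_lt_one_of_one_lt₀ hq)).mul_left (M / q)
  have hq0 : q ≠ 0 := by linarith
  have hq1 : q - 1 ≠ 0 := by linarith
  have hf : (fun i : ℕ => M / q ^ (i + 1)) = fun i : ℕ => M / q * q⁻¹ ^ i := by
    ext i
    rw [inv_pow, pow_succ]
    field_simp
  have hv : M / (q - 1) = M / q * (1 - q⁻¹)⁻¹ := by
    rw [show 1 - q⁻¹ = (q - 1) / q by field_simp]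
    field_simp
  rw [hf, hv]
  exact h

lemma summable_digits {q : ℝ} (hq : 1 < q) {c : ℕ → ℕ} (hc : ∀ i, (c i : ℝ) < q) :
    Summable (fun i => (c i : ℝ) / q ^ (i + 1)) := by
  refine Summable.of_nonneg_of_le (fun i => by positivity) (fun i => ?_) (hasSum_bound hq q).summable
  gcongr
  exact (hc i).le

lemma tsum_digits_le {q : ℝ} (hq : 1 < q) {c : ℕ → ℕ} (hc : ∀ i, (c i : ℝ) < q) :
    ∑' i, (c i : ℝ) / q ^ (i + 1) ≤ (topDigit q : ℝ) / (q - 1) := by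
  rw [← (hasSum_bound hq (topDigit q : ℝ)).tsum_eq]
  refine (summable_digits hq hc).tsum_le_tsum (fun i => ?_) (hasSum_bound hq _).summable
  gcongr
  exact_mod_cast le_topDigit (hc i)

lemma quasiGreedy_lt {q : ℝ} (hq : 1 < q) (x : ℝ) (i : ℕ) : (quasiGreedy q x i : ℝ) < q :=
  lt_of_le_of_lt (by exact_mod_cast qgDigit_le_s14 q _) (topDigit_lt hq)

lemma quasiGreedy_isExpansion {q x : ℝ} (hq : 1 < q) (h0 : 0 ≤ x)
    (hx : x ≤ (topDigit q : ℝ) / (q - 1)) : IsExpansion q (quasiGreedy q x) x := by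
  refine ⟨quasiGreedy_lt hq x, ?_⟩
  have h1 := (summable_digits hq (quasiGreedy_lt hq x)).hasSum.tendsto_sum_nat
  have h2 : Filter.Tendsto (fun n => qgRem q x n / q ^ n) Filter.atTop (nhds 0) := by
    refine squeeze_zero (g := fun n => (topDigit q : ℝ) / (q - 1) / q ^ n)
      (fun n => div_nonneg (qgRem_nonneg hq h0 n) (by positivity)) (fun n => ?_)
      (tendsto_const_nhds.div_atTop (tendsto_pow_atTop_atTop_of_one_lt hq))
    gcongr
    exact qgRem_le hq hx n
  have h3 := h1.add h2
  simp only [partial_sum hq, add_zero] at h3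
  exact tendsto_nhds_unique tendsto_const_nhds h3

/-- If `c` and the quasi-greedy expansion agree before `n`, the value `T` of the tail of `c` after
`n` exceeds the quasi-greedy remainder by the difference of the `n`-th digits. -/
lemma tail_value {q x : ℝ} (hq : 1 < q) {c : ℕ → ℕ} (hc : IsExpansion q c x) {n : ℕ}
    (hn : ∀ i < n, c i = quasiGreedy q x i) :
    ∃ T : ℝ, 0 ≤ T ∧ T ≤ (topDigit q : ℝ) / (q - 1) ∧
      T - qgRem q x (n + 1) = (quasiGreedy q x n : ℝ) - c n := by
  have hq0 : q ≠ 0 := by linarith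
  refine ⟨∑' i, (c (i + (n + 1)) : ℝ) / q ^ (i + 1), tsum_nonneg fun i => by positivity,
    tsum_digits_le hq fun i => hc.1 _, ?_⟩
  have h1 := (summable_digits hq hc.1).sum_add_tsum_nat_add (n + 1)
  have h2 : ∑' i, (c (i + (n + 1)) : ℝ) / q ^ (i + (n + 1) + 1)
      = (∑' i, (c (i + (n + 1)) : ℝ) / q ^ (i + 1)) / q ^ (n + 1) := by
    rw [← tsum_div_const]
    congr 1; ext i
    rw [div_div, ← pow_add]; congr 2; omega
  rw [h2, ← hc.2] at h1
  have h3 := partial_sum hq x (n + 1)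
  rw [Finset.sum_range_succ] at h1 h3
  rw [Finset.sum_congr rfl (fun i hi => by rw [hn i (Finset.mem_range.mp hi)])] at h1
  have h4 : (∑' i, (c (i + (n + 1)) : ℝ) / q ^ (i + 1)) / q ^ (n + 1)
      - qgRem q x (n + 1) / q ^ (n + 1)
      = (quasiGreedy q x n : ℝ) / q ^ (n + 1) - c n / q ^ (n + 1) := by linarith
  rw [← sub_div, ← sub_div, div_left_inj' (by positivity)] at h4
  exact h4

/-- If the complemented tail of the quasi-greedy expansion at `N` is lexicographically smaller than
`α` although its value is at least `1`, then a later positive digit leaves a tail whose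
complement has value greater than `1`, the excess over `1` having been multiplied by at least `q`. -/
lemma excess_step {q x : ℝ} (hq : 1 < q) {N : ℕ}
    (hy : 1 ≤ (topDigit q : ℝ) / (q - 1) - qgRem q x N)
    (hlt : lexLt (fun i => topDigit q - quasiGreedy q x (N + i)) (alphaSeq q)) :
    ∃ m, 0 < quasiGreedy q x m ∧
      1 < (topDigit q : ℝ) / (q - 1) - qgRem q x (m + 1) ∧
      q * ((topDigit q : ℝ) / (q - 1) - qgRem q x N - 1)
        ≤ (topDigit q : ℝ) / (q - 1) - qgRem q x (m + 1) - 1 := by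
  obtain ⟨m, heq, hm⟩ := hlt
  set B := (topDigit q : ℝ) / (q - 1) with hB
  have hBq : q * B = topDigit q + B := bound_eq hq
  have hle : ∀ i, quasiGreedy q x i ≤ topDigit q := fun i => qgDigit_le_s14 q _
  have hαle : alphaSeq q m ≤ topDigit q := qgDigit_le_s14 q _
  have key : ∀ k ≤ m, B - qgRem q x (N + k) - qgRem q 1 k = q ^ k * (B - qgRem q x N - 1) := by
    intro k hk
    induction k with
    | zero => simp [qgRem]
    | succ k ih =>
      have h1 := heq k (by omega)
      have h2 : (topDigit q : ℝ) - quasiGreedy q x (N + k) = quasiGreedy q 1 k := by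
        have h3 : topDigit q = quasiGreedy q x (N + k) + quasiGreedy q 1 k := by
          have := hle (N + k)
          simp only [alphaSeq] at h1
          omega
        rw [h3]; push_cast; ring
      rw [← add_assoc, qgRem_succ, qgRem_succ, pow_succ', mul_assoc, ← ih (by omega)]
      linear_combination -h2 - hBq
  have hk := key m le_rfl
  have ht := qgRem_pos_s14 hq one_pos (m + 1)
  rw [qgRem_succ] at ht
  simp only [alphaSeq] at hm hαle
  have hd : (topDigit q : ℝ) + 1 ≤ quasiGreedy q x (N + m) + quasiGreedy q 1 m := by
    have := hle (N + m)
    have : topDigit q + 1 ≤ quasiGreedy q x (N + m) + quasiGreedy q 1 m := by omega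
    exact_mod_cast this
  have hpow : q * (B - qgRem q x N - 1) ≤ q * (q ^ m * (B - qgRem q x N - 1)) := by
    have := one_le_pow₀ hq.le (n := m)
    have h0 : 0 ≤ B - qgRem q x N - 1 := by linarith
    gcongr
    exact le_mul_of_one_le_left h0 this
  have hnn : 0 ≤ q * (B - qgRem q x N - 1) := mul_nonneg (by linarith) (by linarith)
  rw [← hk] at hpow
  refine ⟨N + m, by omega, ?_, ?_⟩ <;> rw [qgRem_succ] <;> nlinarith

/-- Let `q > 1` and `x ∈ 𝒱_q \ 𝒰_q`. Then the quasi-greedy expansion of `x`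
in base `q` has a tail equal to `α_1 α_2 …` or to its complement. -/
theorem VSet_diff_USet_tail (q : ℝ) (hq : 1 < q) (x : ℝ) (hx : x ∈ VSet q \ USet q) :
    (∃ n, ∀ i, quasiGreedy q x (n + i) = alphaSeq q i) ∨
    (∃ n, ∀ i, quasiGreedy q x (n + i) = topDigit q - alphaSeq q i) := by
  obtain ⟨⟨hJ, hV⟩, hU⟩ := hx
  have h0 : 0 ≤ x := hJ.1
  have hxB : x ≤ (topDigit q : ℝ) / (q - 1) := by rw [topDigit_cast hq]; exact hJ.2
  obtain ⟨c, hc, hne⟩ : ∃ c, IsExpansion q c x ∧ c ≠ quasiGreedy q x := by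
    by_contra! h
    exact hU ⟨hJ, _, quasiGreedy_isExpansion hq h0 hxB, h⟩
  have hex : ∃ n, c n ≠ quasiGreedy q x n := by
    by_contra! h
    exact hne (funext h)
  classical
  obtain ⟨n, hn, hmin⟩ : ∃ n, c n ≠ quasiGreedy q x n ∧ ∀ i < n, c i = quasiGreedy q x i :=
    ⟨Nat.find hex, Nat.find_spec hex, fun i hi => not_not.mp (Nat.find_min hex hi)⟩
  obtain ⟨T, hT0, hTB, hT⟩ := tail_value hq hc hmin
  rcases hn.lt_or_gt with hlt | hgt
  · right
    by_contra! hno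
    -- Without a tail equal to the complement of `α`, every inequality supplied by `𝒱_q` is strict.
    have hstrict : ∀ m, 0 < quasiGreedy q x m →
        lexLt (fun i => topDigit q - quasiGreedy q x (m + 1 + i)) (alphaSeq q) := by
      intro m hm
      refine (hV m hm).resolve_right fun he => ?_
      obtain ⟨i, hi⟩ := hno (m + 1)
      apply hi
      rw [← he]
      have : quasiGreedy q x (m + 1 + i) ≤ topDigit q := qgDigit_le_s14 q _
      simp only
      omega
    have h1 : (c n : ℝ) + 1 ≤ quasiGreedy q x n := by exact_mod_cast hlt
    obtain ⟨m, hm, hm1, -⟩ := excess_step (N := n + 1) hq (by linarith) (hstrict n (by omega))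
    set B := (topDigit q : ℝ) / (q - 1) with hB
    set δ := B - qgRem q x (m + 1) - 1 with hδ
    have hδ0 : 0 < δ := by linarith
    have grow : ∀ k : ℕ, ∃ N, 0 < quasiGreedy q x N ∧ q ^ k * δ ≤ B - qgRem q x (N + 1) - 1 := by
      intro k
      induction k with
      | zero => exact ⟨m, hm, by simp [hδ]⟩
      | succ k ih =>
        obtain ⟨N, hN, hk⟩ := ih
        have : 0 < q ^ k * δ := by positivity
        obtain ⟨N', hN', -, h3⟩ := excess_step (N := N + 1) hq (by linarith) (hstrict N hN)
        refine ⟨N', hN', le_trans ?_ h3⟩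
        rw [pow_succ', mul_assoc]
        gcongr
    obtain ⟨k, hk⟩ := pow_unbounded_of_one_lt (B / δ) hq
    obtain ⟨N, -, hN⟩ := grow k
    rw [div_lt_iff₀ hδ0] at hk
    linarith [qgRem_nonneg hq h0 (N + 1)]
  · left
    have h1 : (quasiGreedy q x n : ℝ) + 1 ≤ c n := by exact_mod_cast hgt
    have h2 : qgRem q x (n + 1) ≤ 1 := rem_le_one (lt_of_lt_of_le hgt (le_topDigit (hc.1 n)))
    have h3 : qgRem q x (n + 1) = 1 := by linarith
    refine ⟨n + 1, fun i => ?_⟩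
    rw [quasiGreedy, qgRem_add, h3]
    rfl
end

section
/- Let G = (1 + √5)/2. Then the quasi-greedy expansion of 1 in base G is (10)^∞ (i.e., α_{2k−1}(G) = 1 and α_{2k}(G) = 0 for all k ≥ 1), G belongs to V, and G is the smallest element of V: every q ∈ V satisfies q ≥ G. -/
/-- The alternating sequence `1, 0, 1, 0, …` that is the expansion of `1` in the golden base. -/
def altSeq (i : ℕ) : ℕ := if i % 2 = 0 then 1 else 0

lemma topDigit_eq_one {q : ℝ} (h1 : 1 < q) (h2 : q < 2) : topDigit q = 1 := by
  have : ⌈q⌉ = 2 := by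
    rw [Int.ceil_eq_iff]
    norm_num
    exact ⟨h1, h2.le⟩
  simp [topDigit, this]

lemma qgDigit_of_one_lt {q y : ℝ} (h1 : 1 < q) (h2 : q < 2) (hy : 1 < q * y) :
    qgDigit q y = 1 := by
  have : 1 < ⌈q * y⌉ := by
    rw [Int.lt_ceil]
    exact_mod_cast hy
  rw [qgDigit, topDigit_eq_one h1 h2]
  omega

lemma qgDigit_of_le_one {q y : ℝ} (hy : q * y ≤ 1) : qgDigit q y = 0 := by
  have : ⌈q * y⌉ ≤ 1 := by
    rw [Int.ceil_le]
    exact_mod_cast hy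
  rw [qgDigit]
  omega

/-- A sequence `b` that exceeds `a` at the first place where they differ is not lexicographically
`≤ a`. -/
lemma not_lexLe_s15 {a b : ℕ → ℕ} {m : ℕ} (heq : ∀ i < m, b i = a i) (hlt : a m < b m) :
    ¬ lexLe b a := by
  rintro (⟨n, hn, hn'⟩ | h)
  · rcases lt_trichotomy n m with h | h | h
    · have := heq n h
      omega
    · subst h
      omega
    · have := hn m h
      omega
  · rw [h] at hlt
    exact lt_irrefl _ hlt

/-- Below the golden ratio, the condition defining `𝒱` for `k = 1` forces `α(q)` to start with
`(10)^n` for every `n`, while the remainder decreases by at least `1 + q - q ^ 2` in each block. -/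
lemma alternating_prefix {q : ℝ} (h1 : 1 < q) (h2 : q < 2) (hc : 0 < 1 + q - q ^ 2)
    (hlex : lexLe (fun i => topDigit q - alphaSeq q (1 + i)) (alphaSeq q)) (n : ℕ) :
    (∀ i < 2 * n, alphaSeq q i = altSeq i) ∧
      qgRem q 1 (2 * n) ≤ 1 - n * (1 + q - q ^ 2) := by
  induction n with
  | zero => simp [qgRem]
  | succ n ih =>
    obtain ⟨ih1, ih2⟩ := ih
    set r := qgRem q 1 (2 * n) with hr
    have hr1 : r ≤ 1 := by
      have : 0 ≤ (n : ℝ) * (1 + q - q ^ 2) := by positivity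
      linarith
    have hdig : 1 < q * r := by
      by_contra! hle
      have h0 : alphaSeq q (2 * n) = 0 := qgDigit_of_le_one hle
      rcases Nat.eq_zero_or_pos n with rfl | hn
      · have : r = 1 := rfl
        rw [this] at hle
        linarith
      · refine not_lexLe_s15 (m := 2 * n - 1) ?_ ?_ hlex
        · intro i hi
          simp only [topDigit_eq_one h1 h2]
          rw [ih1 (1 + i) (by omega), ih1 i (by omega)]
          unfold altSeq
          split_ifs <;> omega
        · simp only [topDigit_eq_one h1 h2]
          rw [show 1 + (2 * n - 1) = 2 * n by omega, h0, ih1 (2 * n - 1) (by omega)]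
          unfold altSeq
          split_ifs <;> omega
    have hd0 : qgDigit q r = 1 := qgDigit_of_one_lt h1 h2 hdig
    have hr' : qgRem q 1 (2 * n + 1) = q * r - 1 := by
      rw [qgRem, ← hr, hd0]
      norm_num
    have hq2 : q ^ 2 * r ≤ q ^ 2 := by nlinarith [sq_nonneg q]
    have hd1 : qgDigit q (q * r - 1) = 0 := qgDigit_of_le_one (by nlinarith)
    refine ⟨?_, ?_⟩
    · intro i hi
      rcases (by omega : i < 2 * n ∨ i = 2 * n ∨ i = 2 * n + 1) with h | rfl | rfl
      · exact ih1 i h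
      · rw [alphaSeq, quasiGreedy, ← hr, hd0]
        simp [altSeq]
      · rw [alphaSeq, quasiGreedy, hr', hd1]
        simp [altSeq, Nat.add_mod]
    · rw [show 2 * (n + 1) = 2 * n + 1 + 1 by ring, qgRem, hr', hd1]
      push_cast
      nlinarith [mul_nonneg (by nlinarith : 0 ≤ q ^ 2 - 1) (sub_nonneg.2 hr1)]

lemma alphaSeq_golden {G : ℝ} (h1 : 1 < G) (h2 : G < 2) (hG : G ^ 2 = G + 1) (i : ℕ) :
    alphaSeq G i = altSeq i := by
  have d0 : qgDigit G 1 = 1 := qgDigit_of_one_lt h1 h2 (by linarith)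
  have d1 : qgDigit G (G - 1) = 0 := qgDigit_of_le_one (by nlinarith)
  have hrem : ∀ i, qgRem G 1 i = if i % 2 = 0 then 1 else G - 1 := by
    intro i
    induction i with
    | zero => rfl
    | succ i ih =>
      rw [qgRem, ih]
      rcases Nat.mod_two_eq_zero_or_one i with h | h
      · have h' : (i + 1) % 2 = 1 := by omega
        simp [h, h', d0]
      · have h' : (i + 1) % 2 = 0 := by omega
        simp only [h, h', d1, one_ne_zero, if_true, if_false]
        push_cast
        linarith
  rw [alphaSeq, quasiGreedy, hrem, altSeq]
  split_ifs
  · exact d0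
  · exact d1

/-- Let `G = (1+√5)/2`. Then the quasi-greedy expansion of `1` in base `G` is
`(10)^∞`, `G ∈ 𝒱`, and `G` is the smallest element of `𝒱`. -/
theorem golden_ratio_smallest_VBase :
    (∀ i, alphaSeq ((1 + Real.sqrt 5) / 2) i = if i % 2 = 0 then 1 else 0) ∧
    (1 + Real.sqrt 5) / 2 ∈ VBases ∧
    ∀ q ∈ VBases, (1 + Real.sqrt 5) / 2 ≤ q := by
  set G := (1 + Real.sqrt 5) / 2 with hGdef
  have hs : Real.sqrt 5 ^ 2 = 5 := Real.sq_sqrt (by norm_num)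
  have hs0 : 0 ≤ Real.sqrt 5 := Real.sqrt_nonneg 5
  have h1 : 1 < G := by
    rw [hGdef]
    nlinarith
  have h2 : G < 2 := by
    rw [hGdef]
    nlinarith
  have hG : G ^ 2 = G + 1 := by
    rw [hGdef]
    nlinarith
  have hα := alphaSeq_golden h1 h2 hG
  refine ⟨hα, ⟨h1, ?_⟩, ?_⟩
  · intro k _
    simp only [lexLe, lexLt, hα, topDigit_eq_one h1 h2]
    rcases Nat.mod_two_eq_zero_or_one k with h | h
    · left
      refine ⟨0, by simp, ?_⟩
      simp [altSeq, h]
    · right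
      funext i
      rw [hα]
      unfold altSeq
      split_ifs <;> omega
  · rintro q ⟨hq1, hq⟩
    by_contra! hlt
    have hc : 0 < 1 + q - q ^ 2 := by nlinarith
    have hq2 : q < 2 := hlt.trans h2
    have hpre := alternating_prefix hq1 hq2 hc (hq 1 le_rfl)
    obtain ⟨n, hn⟩ := exists_nat_gt (1 / (1 + q - q ^ 2))
    rw [div_lt_iff₀ hc] at hn
    have hneg : qgRem q 1 (2 * n) < 0 := by linarith [(hpre n).2]
    have h0 : alphaSeq q (2 * n) = 0 := qgDigit_of_le_one (by nlinarith)
    have := (hpre (n + 1)).1 (2 * n) (by omega)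
    simp [h0, altSeq] at this
end

section
/- Let G = (1 + √5)/2. Then V_G' equals the set of all sequences (c_i) ∈ {0,1}^ℕ in which a one is never followed by two consecutive zeros and a zero is never followed by two consecutive ones; that is, no three consecutive digits form the word 100 or the word 011. -/
/-! ### Quasi-greedy digits in base `φ` -/

open Real in
theorem topDigit_golden : topDigit goldenRatio = 1 := by
  have h : ⌈goldenRatio⌉ = 2 := by
    rw [Int.ceil_eq_iff]
    have h1 := one_lt_goldenRatio
    have h2 := goldenRatio_lt_two
    constructor <;> push_cast <;> linarith
  simp [topDigit, h]

open Real in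
theorem qgDigit_golden (y : ℝ) :
    qgDigit goldenRatio y = if 1 < goldenRatio * y then 1 else 0 := by
  unfold qgDigit
  rw [topDigit_golden]
  split_ifs with h
  · have : 1 < ⌈goldenRatio * y⌉ := by
      rw [Int.lt_ceil]; exact_mod_cast h
    omega
  · have : ⌈goldenRatio * y⌉ ≤ 1 := by
      rw [Int.ceil_le]; push_cast; linarith
    omega

open Real in
theorem qgRem_golden_one (i : ℕ) :
    qgRem goldenRatio 1 i = if i % 2 = 0 then 1 else goldenRatio - 1 := by
  have h1 := one_lt_goldenRatio
  have h2 := goldenRatio_sq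
  induction i with
  | zero => simp [qgRem]
  | succ n ih =>
    rw [qgRem, ih, qgDigit_golden]
    rcases Nat.mod_two_eq_zero_or_one n with h | h
    · have h' : (n + 1) % 2 = 1 := by omega
      simp [h, h', h1]
    · have h' : (n + 1) % 2 = 0 := by omega
      have e : goldenRatio * (goldenRatio - 1) = 1 := by linarith
      simp [h, h', e]

open Real in
/-- The quasi-greedy expansion of `1` in base `φ` is `(10)^∞`. -/
theorem alphaSeq_golden_s16 (i : ℕ) :
    alphaSeq goldenRatio i = if i % 2 = 0 then 1 else 0 := by
  have h1 := one_lt_goldenRatio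
  have h2 := goldenRatio_sq
  rw [alphaSeq, quasiGreedy, qgRem_golden_one, qgDigit_golden]
  have e : goldenRatio * (goldenRatio - 1) = 1 := by linarith
  rcases Nat.mod_two_eq_zero_or_one i with h | h
  · simp [h, h1]
  · simp [h, e]

open Real in
theorem quasiGreedy_golden_le_one (x : ℝ) (i : ℕ) : quasiGreedy goldenRatio x i ≤ 1 := by
  rw [quasiGreedy, qgDigit_golden]; split_ifs <;> simp

open Real in
/-- No quasi-greedy expansion in base `φ` contains the word `011`. -/
theorem quasiGreedy_golden_no_011 (x : ℝ) (i : ℕ) :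
    ¬(quasiGreedy goldenRatio x i = 0 ∧ quasiGreedy goldenRatio x (i + 1) = 1 ∧
      quasiGreedy goldenRatio x (i + 2) = 1) := by
  rintro ⟨h0, h1, h2⟩
  have hp := one_lt_goldenRatio
  have hs := goldenRatio_sq
  have r1 : qgRem goldenRatio x (i + 1) = goldenRatio * qgRem goldenRatio x i := by
    rw [qgRem]; unfold quasiGreedy at h0; simp [h0]
  have r2 : qgRem goldenRatio x (i + 2) = goldenRatio * qgRem goldenRatio x (i + 1) - 1 := by
    rw [qgRem]; unfold quasiGreedy at h1; simp [h1]
  simp only [quasiGreedy, qgDigit_golden] at h0 h2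
  have h0' : qgRem goldenRatio x (i + 1) ≤ 1 := by
    rw [r1]; by_contra hc; simp [not_le.mp hc] at h0
  have h2' : 1 < goldenRatio * qgRem goldenRatio x (i + 2) := by
    by_contra hc; simp [hc] at h2
  rw [r2] at h2'
  nlinarith

open Real in
/-- The word `100` violates the defining lexicographic condition of `𝒱_φ`: the complement of what
follows the `1` begins with `11`, which exceeds `(10)^∞`. -/
theorem no_100_of_lexLe (c : ℕ → ℕ) (n : ℕ)
    (h : lexLe (fun i => topDigit goldenRatio - c (n + 1 + i)) (alphaSeq goldenRatio)) :
    ¬(c (n + 1) = 0 ∧ c (n + 2) = 0) := by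
  rintro ⟨h0, h1⟩
  rw [topDigit_golden] at h
  rcases h with ⟨m, heq, hlt⟩ | h
  · rcases lt_or_ge 1 m with hm | hm
    · have := heq 1 hm
      simp [alphaSeq_golden_s16, h1] at this
    · interval_cases m
      · simp [alphaSeq_golden_s16, h0] at hlt
      · simp [alphaSeq_golden_s16] at hlt
  · have := congrFun h 1
    simp [alphaSeq_golden_s16, h1] at this

/-! ### Values of tails of a digit sequence -/

/-- The finite sum `∑_{i < N} c (m+i) / φ^(i+1)`: the value in base `φ` of the first `N` digits of
the tail of `c` starting at index `m`. -/
noncomputable def partialVal (c : ℕ → ℕ) (N m : ℕ) : ℝ :=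
  ∑ i ∈ Finset.range N, (c (m + i) : ℝ) / Real.goldenRatio ^ (i + 1)

/-- The value `∑ c (m+i) / φ^(i+1)` in base `φ` of the tail of `c` starting at index `m`. -/
noncomputable def tailVal (c : ℕ → ℕ) (m : ℕ) : ℝ :=
  ∑' i : ℕ, (c (m + i) : ℝ) / Real.goldenRatio ^ (i + 1)

open Real in
theorem partialVal_succ (c : ℕ → ℕ) (N m : ℕ) :
    goldenRatio * partialVal c (N + 1) m = c m + partialVal c N (m + 1) := by
  have hp : goldenRatio ≠ 0 := goldenRatio_ne_zero
  unfold partialVal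
  rw [Finset.sum_range_succ', mul_add, Finset.mul_sum, add_comm]
  congr 1
  · generalize goldenRatio = p at hp ⊢
    field_simp; simp
  · refine Finset.sum_congr rfl fun i _ => ?_
    rw [show m + (i + 1) = m + 1 + i by ring]
    generalize goldenRatio = p at hp ⊢
    field_simp
    ring

open Real in
theorem partialVal_le_golden (c : ℕ → ℕ) (hc : ∀ i, c i ≤ 1) (N : ℕ) :
    ∀ m, partialVal c N m ≤ goldenRatio := by
  have hp := one_lt_goldenRatio
  have hs := goldenRatio_sq
  induction N with
  | zero => intro m; simp [partialVal]; linarith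
  | succ N ih =>
    intro m
    have h1 := partialVal_succ c N m
    have h2 := ih (m + 1)
    have h3 : (c m : ℝ) ≤ 1 := by exact_mod_cast hc m
    by_contra h
    nlinarith

open Real in
/-- A tail preceded by `0` in a sequence without `011` has value at most `1`. A leading `0` divides
the bound by `φ`; a leading `1` must be followed by `0`, and `1/φ + 1/φ² = 1`. -/
theorem partialVal_le_one (c : ℕ → ℕ) (hc : ∀ i, c i ≤ 1)
    (h011 : ∀ i, ¬(c i = 0 ∧ c (i + 1) = 1 ∧ c (i + 2) = 1)) (N : ℕ) :
    ∀ m, c m = 0 → partialVal c N (m + 1) ≤ 1 := by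
  have hp := one_lt_goldenRatio
  have hs := goldenRatio_sq
  induction N using Nat.strong_induction_on with
  | _ N ih =>
    intro m hm
    match N, ih with
    | 0, _ => simp [partialVal]
    | 1, _ =>
      have h1 := partialVal_succ c 0 (m + 1)
      have h3 : (c (m + 1) : ℝ) ≤ 1 := by exact_mod_cast hc (m + 1)
      have h4 : partialVal c 0 (m + 1 + 1) = 0 := by simp [partialVal]
      by_contra h
      nlinarith
    | N + 2, ih =>
      have h1 := partialVal_succ c (N + 1) (m + 1)
      rcases Nat.le_one_iff_eq_zero_or_eq_one.mp (hc (m + 1)) with h0 | h0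
      · have h2 := ih (N + 1) (by omega) (m + 1) h0
        rw [h0] at h1
        push_cast at h1
        by_contra h
        nlinarith
      · have h5 : c (m + 2) = 0 := by
          have := h011 m
          have := hc (m + 2)
          grind
        have h2 := ih N (by omega) (m + 2) h5
        have h6 := partialVal_succ c N (m + 1 + 1)
        rw [show m + 1 + 1 = m + 2 by ring, h5] at h6
        rw [show m + 1 + 1 = m + 2 by ring, h0] at h1
        push_cast at h1 h6
        have h7 : goldenRatio ^ 2 * partialVal c (N + 2) (m + 1)
            = goldenRatio + partialVal c N (m + 2 + 1) := by
          rw [pow_two, mul_assoc, h1]; linarith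
        by_contra h
        nlinarith

open Real in
theorem summable_tailVal (c : ℕ → ℕ) (hc : ∀ i, c i ≤ 1) (m : ℕ) :
    Summable fun i : ℕ => (c (m + i) : ℝ) / goldenRatio ^ (i + 1) :=
  summable_of_sum_range_le (c := goldenRatio)
    (fun i => by have := goldenRatio_pos; positivity)
    (fun N => partialVal_le_golden c hc N m)

open Real in
theorem tailVal_le (c : ℕ → ℕ) (hc : ∀ i, c i ≤ 1) (m : ℕ) (B : ℝ)
    (h : ∀ N, partialVal c N m ≤ B) : tailVal c m ≤ B :=
  (summable_tailVal c hc m).tsum_le_of_sum_range_le h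

open Real in
theorem tailVal_succ (c : ℕ → ℕ) (hc : ∀ i, c i ≤ 1) (m : ℕ) :
    tailVal c (m + 1) = goldenRatio * tailVal c m - c m := by
  have hp : goldenRatio ≠ 0 := goldenRatio_ne_zero
  have h := (summable_tailVal c hc m).tsum_eq_zero_add
  unfold tailVal
  rw [h, mul_add, ← tsum_mul_left]
  have e : goldenRatio * ((c (m + 0) : ℝ) / goldenRatio ^ (0 + 1)) = c m := by
    generalize goldenRatio = p at hp ⊢
    field_simp; simp
  rw [e, add_sub_cancel_left]
  refine tsum_congr fun i => ?_
  rw [show m + (i + 1) = m + 1 + i by ring]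
  generalize goldenRatio = p at hp ⊢
  field_simp
  ring

open Real in
theorem tailVal_nonneg (c : ℕ → ℕ) (m : ℕ) : 0 ≤ tailVal c m :=
  tsum_nonneg fun i => by have := goldenRatio_pos; positivity

open Real in
theorem tailVal_pos (c : ℕ → ℕ) (hc : ∀ i, c i ≤ 1) (m j : ℕ) (hj : c (m + j) = 1) :
    0 < tailVal c m := by
  have hp := goldenRatio_pos
  refine (summable_tailVal c hc m).tsum_pos (fun i => by positivity) j ?_
  rw [hj]; positivity

open Real in
/-- A sequence avoiding `100` and `011` satisfies the quasi-greedy rule at each index: its digit is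
the one dictated by the value of its tail. -/
theorem qgDigit_tailVal (c : ℕ → ℕ) (hc : ∀ i, c i ≤ 1)
    (h100 : ∀ i, ¬(c i = 1 ∧ c (i + 1) = 0 ∧ c (i + 2) = 0))
    (h011 : ∀ i, ¬(c i = 0 ∧ c (i + 1) = 1 ∧ c (i + 2) = 1)) (n : ℕ) :
    qgDigit goldenRatio (tailVal c n) = c n := by
  have hT := tailVal_succ c hc n
  rw [qgDigit_golden]
  rcases Nat.le_one_iff_eq_zero_or_eq_one.mp (hc n) with h0 | h0
  · have := tailVal_le c hc (n + 1) 1 fun N => partialVal_le_one c hc h011 N n h0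
    rw [h0] at hT ⊢
    push_cast at hT
    rw [if_neg (by linarith)]
  · have hpos : 0 < tailVal c (n + 1) := by
      rcases Nat.le_one_iff_eq_zero_or_eq_one.mp (hc (n + 1)) with h1 | h1
      · refine tailVal_pos c hc (n + 1) 1 ?_
        have := h100 n
        have := hc (n + 2)
        grind
      · exact tailVal_pos c hc (n + 1) 0 h1
    rw [h0] at hT ⊢
    push_cast at hT
    rw [if_pos (by linarith)]

open Real in
theorem quasiGreedy_tailVal (c : ℕ → ℕ) (hc : ∀ i, c i ≤ 1)
    (h100 : ∀ i, ¬(c i = 1 ∧ c (i + 1) = 0 ∧ c (i + 2) = 0))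
    (h011 : ∀ i, ¬(c i = 0 ∧ c (i + 1) = 1 ∧ c (i + 2) = 1)) :
    quasiGreedy goldenRatio (tailVal c 0) = c := by
  have hrem : ∀ n, qgRem goldenRatio (tailVal c 0) n = tailVal c n := by
    intro n
    induction n with
    | zero => rfl
    | succ n ih => rw [qgRem, ih, qgDigit_tailVal c hc h100 h011, tailVal_succ c hc]
  funext n
  rw [quasiGreedy, hrem, qgDigit_tailVal c hc h100 h011]

/-! ### The lexicographic condition -/

open Real in
theorem lexLe_of_avoids (c : ℕ → ℕ) (hc : ∀ i, c i ≤ 1)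
    (h100 : ∀ i, ¬(c i = 1 ∧ c (i + 1) = 0 ∧ c (i + 2) = 0))
    (h011 : ∀ i, ¬(c i = 0 ∧ c (i + 1) = 1 ∧ c (i + 2) = 1)) (n : ℕ) (hn : c n = 1) :
    lexLe (fun i => topDigit goldenRatio - c (n + 1 + i)) (alphaSeq goldenRatio) := by
  rw [topDigit_golden]
  rcases Nat.le_one_iff_eq_zero_or_eq_one.mp (hc (n + 1)) with h0 | h0
  · right
    -- after `10` the digits are forced to alternate
    have key : ∀ i, c (n + 1 + i) = i % 2 ∧ c (n + i) = (i + 1) % 2 := by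
      intro i
      induction i with
      | zero => exact ⟨h0, hn⟩
      | succ i ih =>
        have h1 := h100 (n + i)
        have h2 := h011 (n + i)
        have h3 := hc (n + i + 2)
        rw [show n + 1 + i = n + i + 1 by ring] at ih
        rw [show n + 1 + (i + 1) = n + i + 2 by ring, show n + (i + 1) = n + i + 1 by ring]
        omega
    funext i
    rw [alphaSeq_golden_s16, (key i).1]
    split_ifs <;> omega
  · left
    exact ⟨0, by simp, by simp [h0, alphaSeq_golden_s16]⟩

open Real in
theorem Jset_golden : Jset goldenRatio = Set.Icc 0 goldenRatio := by
  have hp := one_lt_goldenRatio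
  have h2 := goldenRatio_lt_two
  have hs := goldenRatio_sq
  have h : ⌈goldenRatio⌉ = 2 := by
    rw [Int.ceil_eq_iff]
    constructor <;> push_cast <;> linarith
  have e : (((2 : ℤ) : ℝ) - 1) / (goldenRatio - 1) = goldenRatio := by
    rw [div_eq_iff (by linarith)]; push_cast; linarith
  rw [Jset, h, e]

/-- Let `G = (1+√5)/2`. Then `𝒱_G'` is the set of sequences in `{0,1}^ℕ` in
which a one is never followed by two zeros and a zero is never followed by two ones. -/
theorem VSeq_golden_ratio :
    VSeq ((1 + Real.sqrt 5) / 2) =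
      {c : ℕ → ℕ | (∀ i, c i ≤ 1) ∧
        ∀ i, ¬(c i = 1 ∧ c (i + 1) = 0 ∧ c (i + 2) = 0) ∧
             ¬(c i = 0 ∧ c (i + 1) = 1 ∧ c (i + 2) = 1)} := by
  change VSeq Real.goldenRatio = _
  ext c
  constructor
  · rintro ⟨x, ⟨_, hV⟩, rfl⟩
    refine ⟨fun i => quasiGreedy_golden_le_one x i, fun i => ⟨?_, quasiGreedy_golden_no_011 x i⟩⟩
    rintro ⟨h1, h2⟩
    exact no_100_of_lexLe _ i (hV i (Nat.lt_of_lt_of_eq Nat.one_pos h1.symm)) h2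
  · rintro ⟨hc, h⟩
    have h100 := fun i => (h i).1
    have h011 := fun i => (h i).2
    have hq := quasiGreedy_tailVal c hc h100 h011
    refine ⟨tailVal c 0, ⟨?_, ?_⟩, hq⟩
    · rw [Jset_golden]
      exact ⟨tailVal_nonneg c 0,
        tailVal_le c hc 0 _ fun N => partialVal_le_golden c hc N 0⟩
    · intro n hn
      rw [hq] at hn ⊢
      exact lexLe_of_avoids c hc h100 h011 n (by have := hc n; omega)
end

section
/- For each n ≥ 1 let q_n ∈ (1, 2) be the base whose quasi-greedy expansion of 1 equals (110)^n (10)^∞. Then: (a) each q_n belongs to U; (b) the limit q* := lim_{n→∞} q_n exists and the quasi-greedy expansion of 1 in base q* is (110)^∞; and (c) q* ∈ closure(U) ∖ U; in particular, 1 1 1 0^∞ is an expansion of 1 in base q* distinct from the quasi-greedy one. -/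
/-- The sequence `(110)^n (10)^∞`, `0`-indexed. -/
def pattern (n : ℕ) (i : ℕ) : ℕ :=
  if i < 3 * n then (if i % 3 = 2 then 0 else 1)
  else (if (i - 3 * n) % 2 = 0 then 1 else 0)

/-- The sequence `(110)^∞`, `0`-indexed. -/
def patternStar (i : ℕ) : ℕ := if i % 3 = 2 then 0 else 1


lemma qgDigit_of_lt {q y : ℝ} (h1 : 1 < q) (h2 : q < 2) (h : 1 < q * y) : qgDigit q y = 1 := by
  have : 1 < ⌈q * y⌉ := Int.lt_ceil.2 (by exact_mod_cast h)
  rw [qgDigit, topDigit_eq_one h1 h2]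
  omega

lemma qgDigit_of_le {q y : ℝ} (h : q * y ≤ 1) : qgDigit q y = 0 := by
  have : ⌈q * y⌉ ≤ 1 := Int.ceil_le.2 (by exact_mod_cast h)
  rw [qgDigit]
  omega

lemma qgRem_mem {q : ℝ} (h1 : 1 < q) (h2 : q < 2) (k : ℕ) :
    0 < qgRem q 1 k ∧ qgRem q 1 k ≤ 1 := by
  induction k with
  | zero => simp [qgRem]
  | succ k ih =>
    obtain ⟨ih0, ih1⟩ := ih
    rcases lt_or_ge 1 (q * qgRem q 1 k) with h | h
    · rw [qgRem, qgDigit_of_lt h1 h2 h]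
      push_cast
      constructor <;> nlinarith
    · rw [qgRem, qgDigit_of_le h]
      push_cast
      constructor <;> nlinarith

/-- A digit sequence whose remainders stay bounded is an expansion. -/
lemma isExpansion_of_rem {q x M : ℝ} (h1 : 1 < q) {d : ℕ → ℕ} {r : ℕ → ℝ}
    (hd : ∀ i, (d i : ℝ) < q) (h0 : r 0 = x) (hs : ∀ k, r (k + 1) = q * r k - d k)
    (hb : ∀ k, |r k| ≤ M) : IsExpansion q d x := by
  refine ⟨hd, ?_⟩
  have hq : 0 < q := by linarith
  have hpart : ∀ k, ∑ i ∈ Finset.range k, (d i : ℝ) / q ^ (i + 1) = x - r k * (q⁻¹) ^ k := by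
    intro k
    induction k with
    | zero => simp [h0]
    | succ k ih =>
      rw [Finset.sum_range_succ, ih, hs, inv_pow, inv_pow]
      field_simp
      ring
  have hlim : Filter.Tendsto (fun k => r k * (q⁻¹) ^ k) Filter.atTop (nhds 0) := by
    have hg := (tendsto_pow_atTop_nhds_zero_of_lt_one (inv_nonneg.2 hq.le)
      (inv_lt_one_of_one_lt₀ h1)).const_mul M
    rw [mul_zero] at hg
    refine squeeze_zero_norm (fun k => ?_) hg
    rw [norm_mul, Real.norm_eq_abs, Real.norm_of_nonneg (by positivity)]
    exact mul_le_mul_of_nonneg_right (hb k) (by positivity)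
  have hsum : HasSum (fun i => (d i : ℝ) / q ^ (i + 1)) x := by
    rw [hasSum_iff_tendsto_nat_of_nonneg (fun i => by positivity)]
    simp only [hpart]
    simpa using hlim.const_sub x
  exact hsum.tsum_eq.symm

/-- An expansion in a base `q ∈ (1, 2)` has digits `0, 1` and remainders in `[0, 1/(q-1)]`. -/
lemma exists_rem {q x : ℝ} (h1 : 1 < q) (h2 : q < 2) {c : ℕ → ℕ} (hc : IsExpansion q c x) :
    ∃ s : ℕ → ℝ, s 0 = x ∧ (∀ k, s (k + 1) = q * s k - c k) ∧
      (∀ k, 0 ≤ s k ∧ s k * (q - 1) ≤ 1) ∧ ∀ k, c k ≤ 1 := by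
  have hq : 0 < q := by linarith
  have hq1 : 0 < q - 1 := by linarith
  have hc1 : ∀ k, c k ≤ 1 := by
    intro k
    have : (c k : ℝ) < (2 : ℕ) := by push_cast; linarith [hc.1 k]
    have := Nat.cast_lt.1 this
    omega
  have hgeo : HasSum (fun i : ℕ => 1 / q ^ (i + 1)) (1 / (q - 1)) := by
    have h := (hasSum_geometric_of_lt_one (inv_nonneg.2 hq.le)
      (inv_lt_one_of_one_lt₀ h1)).mul_left q⁻¹
    have e : q⁻¹ * (1 - q⁻¹)⁻¹ = 1 / (q - 1) := by
      rw [← mul_inv, mul_sub, mul_inv_cancel₀ hq.ne']; simp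
    rw [e] at h
    have hf : (fun i : ℕ => 1 / q ^ (i + 1)) = fun i : ℕ => q⁻¹ * q⁻¹ ^ i := by
      funext i
      rw [one_div, ← pow_succ', inv_pow]
    rwa [hf]
  have hle : ∀ k i : ℕ, (c (k + i) : ℝ) / q ^ (i + 1) ≤ 1 / q ^ (i + 1) := by
    intro k i
    have : (c (k + i) : ℝ) ≤ 1 := by exact_mod_cast hc1 _
    gcongr
  have hsm : ∀ k : ℕ, Summable (fun i : ℕ => (c (k + i) : ℝ) / q ^ (i + 1)) := fun k =>
    Summable.of_nonneg_of_le (fun i => by positivity) (hle k) hgeo.summable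
  refine ⟨fun k => ∑' i, (c (k + i) : ℝ) / q ^ (i + 1), ?_, ?_, ?_, hc1⟩
  · simpa using hc.2.symm
  · intro k
    simp only
    rw [(hsm k).tsum_eq_zero_add, mul_add, ← tsum_mul_left]
    have : ∀ i : ℕ, q * ((c (k + (i + 1)) : ℝ) / q ^ (i + 1 + 1))
        = (c (k + 1 + i) : ℝ) / q ^ (i + 1) := by
      intro i
      rw [show k + (i + 1) = k + 1 + i by ring]
      field_simp
      ring
    simp only [this]
    simp
    field_simp
    ring
  · intro k
    refine ⟨tsum_nonneg fun i => by positivity, ?_⟩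
    rw [← le_div_iff₀ hq1, ← hgeo.tsum_eq]
    exact (hsm k).tsum_le_tsum (hle k) hgeo.summable

/-- Uniqueness criterion in terms of remainders: `d` is the only expansion of `x` if its remainder
is less than `1` after each digit `0` and exceeds `1/(q-1) - 1` after each digit `1`. -/
lemma unique_of_rem {q x : ℝ} (h1 : 1 < q) (h2 : q < 2) {d : ℕ → ℕ} {r : ℕ → ℝ}
    (hd : ∀ i, d i ≤ 1) (h0 : r 0 = x) (hs : ∀ k, r (k + 1) = q * r k - d k)
    (hlow : ∀ k, d k = 0 → r (k + 1) < 1)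
    (hhigh : ∀ k, d k = 1 → 1 < (r (k + 1) + 1) * (q - 1))
    {c : ℕ → ℕ} (hc : IsExpansion q c x) : c = d := by
  obtain ⟨s, s0, ss, sb, hc1⟩ := exists_rem h1 h2 hc
  have step : ∀ k, s k = r k → c k = d k := by
    intro k hk
    have e1 := ss k
    have e2 := hs k
    have hb := sb (k + 1)
    rcases Nat.le_one_iff_eq_zero_or_eq_one.1 (hc1 k) with a | a <;>
    rcases Nat.le_one_iff_eq_zero_or_eq_one.1 (hd k) with b | b
    · rw [a, b]
    · exfalso
      have := hhigh k b
      rw [a, hk] at e1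
      rw [b] at e2
      push_cast at e1 e2
      have : s (k + 1) = r (k + 1) + 1 := by linarith
      rw [this] at hb
      linarith [hb.2]
    · exfalso
      have := hlow k b
      rw [a, hk] at e1
      rw [b] at e2
      push_cast at e1 e2
      linarith [hb.1]
    · rw [a, b]
  have hall : ∀ k, s k = r k := by
    intro k
    induction k with
    | zero => rw [s0, h0]
    | succ k ih => rw [ss, hs, ih, step k ih]
  exact funext fun k => step k (hall k)

/-! ### The bases with expansion `(110)^n (10)^∞` -/

lemma eq_zero_of_pow_mul_bounded {a e M : ℝ} (ha : 1 < a) (h : ∀ i : ℕ, |a ^ i * e| ≤ M) :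
    e = 0 := by
  by_contra he
  have hpos : 0 < |e| := abs_pos.2 he
  obtain ⟨i, hi⟩ := pow_unbounded_of_one_lt (M / |e|) ha
  have := h i
  rw [abs_mul, abs_of_pos (by positivity)] at this
  rw [div_lt_iff₀ hpos] at hi
  linarith

lemma pattern_le_one (n i : ℕ) : pattern n i ≤ 1 := by
  unfold pattern; split_ifs <;> omega

lemma pattern_head {n j : ℕ} (hj : j < n) :
    pattern n (3 * j) = 1 ∧ pattern n (3 * j + 1) = 1 ∧ pattern n (3 * j + 2) = 0 := by
  unfold pattern
  refine ⟨?_, ?_, ?_⟩ <;> split_ifs <;> omega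

lemma pattern_tail (n i : ℕ) :
    pattern n (3 * n + 2 * i) = 1 ∧ pattern n (3 * n + 2 * i + 1) = 0 := by
  unfold pattern
  refine ⟨?_, ?_⟩ <;> split_ifs <;> omega

/-- The remainder equals the value `q / (q² - 1)` of `(10)^∞` at every even position of the
tail. -/
lemma tail_rem {q : ℝ} {n : ℕ} {r : ℕ → ℝ} (h1 : 1 < q)
    (hs : ∀ k, r (k + 1) = q * r k - pattern n k) (hb : ∀ k, 0 < r k ∧ r k ≤ 1) (i : ℕ) :
    r (3 * n + 2 * i) * (q ^ 2 - 1) = q := by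
  have hq2 : 1 < q ^ 2 := by nlinarith
  have hq3 : 0 < q ^ 2 - 1 := by linarith
  have step : ∀ i, r (3 * n + 2 * (i + 1)) = q ^ 2 * r (3 * n + 2 * i) - q := by
    intro i
    rw [show 3 * n + 2 * (i + 1) = 3 * n + 2 * i + 1 + 1 by ring, hs, hs,
      (pattern_tail n i).1, (pattern_tail n i).2]
    push_cast; ring
  have closed : ∀ i, (q ^ 2) ^ i * (r (3 * n) * (q ^ 2 - 1) - q)
      = r (3 * n + 2 * i) * (q ^ 2 - 1) - q := by
    intro i
    induction i with
    | zero => simp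
    | succ i ih => rw [step, pow_succ]; linear_combination q ^ 2 * ih
  have hz : r (3 * n) * (q ^ 2 - 1) - q = 0 := by
    refine eq_zero_of_pow_mul_bounded (M := q ^ 2 - 1 + q) hq2 fun i => ?_
    rw [closed, abs_le]
    have := hb (3 * n + 2 * i)
    constructor <;> nlinarith
  have := closed i
  rw [hz, mul_zero] at this
  linarith

lemma head_rem {q : ℝ} {n : ℕ} {r : ℕ → ℝ} (h0 : r 0 = 1)
    (hs : ∀ k, r (k + 1) = q * r k - pattern n k) {j : ℕ} (hj : j ≤ n) :
    (q ^ 3 - 1) * r (3 * j) = q ^ 2 + q + q ^ (3 * j) * (q ^ 3 - q ^ 2 - q - 1) := by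
  induction j with
  | zero => simp [h0]; ring
  | succ j ih =>
    obtain ⟨p0, p1, p2⟩ := pattern_head (n := n) (j := j) (by omega)
    rw [show 3 * (j + 1) = 3 * j + 2 + 1 by ring, hs, hs (3 * j + 1), hs (3 * j), p0, p1, p2]
    push_cast
    linear_combination q ^ 3 * ih (by omega)

lemma base_equation {q : ℝ} {n : ℕ} {r : ℕ → ℝ} (h1 : 1 < q) (h0 : r 0 = 1)
    (hs : ∀ k, r (k + 1) = q * r k - pattern n k) (hb : ∀ k, 0 < r k ∧ r k ≤ 1) :
    (q + 1) * q ^ (3 * n) * (q ^ 3 - q ^ 2 - q - 1) = - q ^ 2 := by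
  have e1 := head_rem h0 hs le_rfl
  have e2 := tail_rem h1 hs hb 0
  simp only [mul_zero, add_zero] at e2
  have hq : q - 1 ≠ 0 := by linarith
  apply mul_left_cancel₀ hq
  linear_combination (q ^ 3 - 1) * e2 - (q ^ 2 - 1) * e1

/-- The quasi-greedy remainders of `1` satisfy the hypotheses of `tail_rem`, `head_rem` and
`base_equation` when the digits are `(110)^n (10)^∞`. -/
lemma rem_facts {q : ℝ} {n : ℕ} (h1 : 1 < q) (h2 : q < 2)
    (h : ∀ i, quasiGreedy q 1 i = pattern n i) :
    qgRem q 1 0 = 1 ∧ (∀ k, qgRem q 1 (k + 1) = q * qgRem q 1 k - pattern n k) ∧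
      ∀ k, 0 < qgRem q 1 k ∧ qgRem q 1 k ≤ 1 := by
  refine ⟨rfl, fun k => ?_, qgRem_mem h1 h2⟩
  rw [← h k]
  rfl

lemma base_bounds {q : ℝ} {n : ℕ} (hn : 1 ≤ n) (h1 : 1 < q)
    (he : (q + 1) * q ^ (3 * n) * (q ^ 3 - q ^ 2 - q - 1) = - q ^ 2) :
    3 / 2 < q ∧ 0 < q ^ 2 - q - 1 ∧ q ^ 3 - q ^ 2 - q - 1 < 0 := by
  have hq : 0 < q := by linarith
  have hP : q ^ 3 - q ^ 2 - q - 1 < 0 := by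
    by_contra hcon
    push Not at hcon
    have : 0 ≤ (q + 1) * q ^ (3 * n) * (q ^ 3 - q ^ 2 - q - 1) := by positivity
    nlinarith
  have hpow : q ^ 2 ≤ q ^ (3 * n) := pow_le_pow_right₀ h1.le (by omega)
  have hG : 0 < q ^ 2 - q - 1 := by
    by_contra hcon
    push Not at hcon
    -- `q² - q - 1 ≤ 0` makes `-P(q) ≥ 1`, so the left side has modulus at least `(q + 1) q²`.
    have h3 : 1 ≤ -(q ^ 3 - q ^ 2 - q - 1) := by nlinarith
    have h4 : (q + 1) * q ^ 2 * 1 ≤ (q + 1) * q ^ (3 * n) * -(q ^ 3 - q ^ 2 - q - 1) := by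
      gcongr
    nlinarith [pow_pos hq 2, pow_pos hq 3]
  exact ⟨by nlinarith, hG, hP⟩

lemma mem_univBases {q : ℝ} {n : ℕ} (hn : 1 ≤ n) (h1 : 1 < q) (h2 : q < 2)
    (h : ∀ i, quasiGreedy q 1 i = pattern n i) : q ∈ UnivBases := by
  obtain ⟨h0, hs, hb⟩ := rem_facts h1 h2 h
  have he := base_equation h1 h0 hs hb
  obtain ⟨-, hG, hP⟩ := base_bounds hn h1 he
  have htail := tail_rem h1 hs hb
  generalize qgRem q 1 = r at *
  have hq : 0 < q := by linarith
  have hq2 : 0 < q ^ 2 - 1 := by nlinarith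
  have hq3 : 0 < q ^ 3 - 1 := by nlinarith
  -- `r_{3j} ≥ r_{3n} = q / (q² - 1)` in the initial block.
  have hge : ∀ j, j ≤ n → q ≤ r (3 * j) * (q ^ 2 - 1) := by
    intro j hj
    have e1 := head_rem h0 hs hj
    have e2 := head_rem h0 hs (le_refl n)
    have e3 := htail 0
    simp only [mul_zero, add_zero] at e3
    have hp : q ^ (3 * j) ≤ q ^ (3 * n) := pow_le_pow_right₀ h1.le (by omega)
    have : (q ^ 3 - 1) * r (3 * n) ≤ (q ^ 3 - 1) * r (3 * j) := by
      rw [e1, e2]; nlinarith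
    have := le_of_mul_le_mul_left this hq3
    nlinarith
  have hlt : ∀ j, 1 ≤ j → j ≤ n → r (3 * j) < 1 := by
    intro j hj1 hj
    have e1 := head_rem h0 hs hj
    have hp : 1 < q ^ (3 * j) := one_lt_pow₀ h1 (by omega)
    have : (q ^ 3 - 1) * r (3 * j) < (q ^ 3 - 1) * 1 := by
      rw [e1]; nlinarith
    exact lt_of_mul_lt_mul_left this hq3.le
  -- `1/(q² - 1)` exceeds `1/(q-1) - 1` because `q² - q - 1 > 0`.
  have key : ∀ y : ℝ, 1 ≤ y * (q ^ 2 - 1) → 1 < (y + 1) * (q - 1) := by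
    intro y hy
    have : (q + 1) * 1 < (q + 1) * ((y + 1) * (q - 1)) := by nlinarith
    exact lt_of_mul_lt_mul_left this (by linarith)
  have hdig : ∀ k, (∃ j, j < n ∧ (k = 3 * j ∨ k = 3 * j + 1 ∨ k = 3 * j + 2)) ∨
      ∃ i, k = 3 * n + 2 * i ∨ k = 3 * n + 2 * i + 1 := by
    intro k
    rcases lt_or_ge k (3 * n) with hk | hk
    · exact Or.inl ⟨k / 3, by omega, by omega⟩
    · exact Or.inr ⟨(k - 3 * n) / 2, by omega⟩
  refine ⟨h1, pattern n, ?_, ?_⟩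
  · refine isExpansion_of_rem (M := 1) h1 (fun i => ?_) h0 hs fun k => ?_
    · have : (pattern n i : ℝ) ≤ 1 := by exact_mod_cast pattern_le_one n i
      linarith
    · rw [abs_of_pos (hb k).1]
      exact (hb k).2
  · intro c hc
    refine unique_of_rem h1 h2 (pattern_le_one n) h0 hs ?_ ?_ hc
    · intro k hk
      rcases hdig k with ⟨j, hj, rfl | rfl | rfl⟩ | ⟨i, rfl | rfl⟩
      · have := (pattern_head hj).1; omega
      · have := (pattern_head hj).2.1; omega
      · exact hlt (j + 1) (by omega) (by omega)
      · have := (pattern_tail n i).1; omega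
      · have e1 := htail (i + 1)
        rw [show 3 * n + 2 * (i + 1) = 3 * n + 2 * i + 1 + 1 by ring] at e1
        by_contra hcon
        push Not at hcon
        nlinarith
    · intro k hk
      apply key
      rcases hdig k with ⟨j, hj, rfl | rfl | rfl⟩ | ⟨i, rfl | rfl⟩
      · rw [hs, hk]
        have := hge j hj.le
        push_cast
        nlinarith
      · have e := hs (3 * j + 1 + 1)
        rw [show 3 * j + 1 + 1 = 3 * j + 2 by ring, (pattern_head hj).2.2] at e
        have hg := hge (j + 1) (by omega)
        rw [show 3 * (j + 1) = 3 * j + 2 + 1 by ring, e] at hg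
        push_cast at hg
        have : q * 1 ≤ q * (r (3 * j + 2) * (q ^ 2 - 1)) := by linarith
        exact le_of_mul_le_mul_left this hq
      · have := (pattern_head hj).2.2; omega
      · rw [hs, hk]
        have := htail i
        push_cast
        nlinarith
      · have := (pattern_tail n i).2; omega

/-! ### The limit base -/

lemma exists_tribonacci : ∃ t : ℝ, 3 / 2 < t ∧ t < 2 ∧ t ^ 3 - t ^ 2 - t - 1 = 0 := by
  have hc : ContinuousOn (fun t : ℝ => t ^ 3 - t ^ 2 - t - 1) (Set.Icc (3 / 2) 2) := by fun_prop
  have h := intermediate_value_Ioo (by norm_num) hc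
  obtain ⟨t, ⟨ha, hb⟩, ht⟩ := h (show (0 : ℝ) ∈ _ by constructor <;> norm_num)
  exact ⟨t, ha, hb, ht⟩

lemma star_rem {t : ℝ} (ha : 3 / 2 < t) (hb : t < 2) (ht : t ^ 3 - t ^ 2 - t - 1 = 0) (j : ℕ) :
    qgRem t 1 (3 * j) = 1 ∧ quasiGreedy t 1 (3 * j) = 1 ∧ quasiGreedy t 1 (3 * j + 1) = 1 ∧
      quasiGreedy t 1 (3 * j + 2) = 0 ∧ qgRem t 1 (3 * j + 3) = 1 := by
  have main : ∀ k, qgRem t 1 k = 1 → quasiGreedy t 1 k = 1 ∧ quasiGreedy t 1 (k + 1) = 1 ∧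
      quasiGreedy t 1 (k + 2) = 0 ∧ qgRem t 1 (k + 3) = 1 := by
    intro k hk
    have h1 : 1 < t := by linarith
    have d0 : qgDigit t (qgRem t 1 k) = 1 := qgDigit_of_lt h1 hb (by rw [hk]; linarith)
    have r1 : qgRem t 1 (k + 1) = t - 1 := by rw [qgRem, d0, hk]; push_cast; ring
    have d1 : qgDigit t (qgRem t 1 (k + 1)) = 1 :=
      qgDigit_of_lt h1 hb (by rw [r1]; nlinarith)
    have r2 : qgRem t 1 (k + 2) = t ^ 2 - t - 1 := by rw [qgRem, d1, r1]; push_cast; ring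
    have d2 : qgDigit t (qgRem t 1 (k + 2)) = 0 :=
      qgDigit_of_le (by rw [r2]; linarith)
    have r3 : qgRem t 1 (k + 3) = 1 := by
      rw [qgRem, d2, r2]; push_cast; linear_combination ht
    exact ⟨d0, d1, d2, r3⟩
  have hr : ∀ j, qgRem t 1 (3 * j) = 1 := by
    intro j
    induction j with
    | zero => rfl
    | succ j ih => exact (main _ ih).2.2.2
  exact ⟨hr j, main _ (hr j)⟩

lemma quasiGreedy_star {t : ℝ} (ha : 3 / 2 < t) (hb : t < 2) (ht : t ^ 3 - t ^ 2 - t - 1 = 0)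
    (i : ℕ) : quasiGreedy t 1 i = patternStar i := by
  obtain ⟨-, d0, d1, d2, -⟩ := star_rem ha hb ht (i / 3)
  have hi : i = 3 * (i / 3) ∨ i = 3 * (i / 3) + 1 ∨ i = 3 * (i / 3) + 2 := by omega
  unfold patternStar
  rcases hi with h | h | h
  · rw [← h] at d0; rw [d0, if_neg (by omega)]
  · rw [← h] at d1; rw [d1, if_neg (by omega)]
  · rw [← h] at d2; rw [d2, if_pos (by omega)]

lemma isExpansion_quasiGreedy_one {q : ℝ} (h1 : 1 < q) (h2 : q < 2) :
    IsExpansion q (quasiGreedy q 1) 1 := by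
  refine isExpansion_of_rem (M := 1) (r := qgRem q 1) h1 (fun i => ?_) rfl (fun k => rfl)
    fun k => ?_
  · have : quasiGreedy q 1 i ≤ 1 := by
      have := topDigit_eq_one h1 h2
      rw [quasiGreedy, qgDigit]
      omega
    have : (quasiGreedy q 1 i : ℝ) ≤ 1 := by exact_mod_cast this
    linarith
  · rw [abs_of_pos (qgRem_mem h1 h2 k).1]
    exact (qgRem_mem h1 h2 k).2

lemma isExpansion_three_ones {t : ℝ} (h1 : 1 < t) (ht : t ^ 3 - t ^ 2 - t - 1 = 0) :
    IsExpansion t (fun i => if i < 3 then 1 else 0) 1 := by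
  refine ⟨fun i => ?_, ?_⟩
  · dsimp only
    split_ifs <;> push_cast <;> linarith
  · rw [tsum_eq_sum (s := Finset.range 3)]
    · simp [Finset.sum_range_succ]
      field_simp
      linear_combination ht
    · intro i hi
      simp at hi
      simp [hi]

lemma tendsto_base {qn : ℕ → ℝ} {t : ℝ} (ha : 3 / 2 < t) (ht : t ^ 3 - t ^ 2 - t - 1 = 0)
    (h : ∀ n, 1 ≤ n → 3 / 2 < qn n ∧
      (qn n + 1) * qn n ^ (3 * n) * (qn n ^ 3 - qn n ^ 2 - qn n - 1) = - qn n ^ 2) :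
    Filter.Tendsto qn Filter.atTop (nhds t) := by
  rw [tendsto_iff_norm_sub_tendsto_zero]
  have hg : Filter.Tendsto (fun n : ℕ => (2 / 3 : ℝ) ^ n) Filter.atTop (nhds 0) :=
    tendsto_pow_atTop_nhds_zero_of_lt_one (by norm_num) (by norm_num)
  refine squeeze_zero' (Filter.Eventually.of_forall fun n => norm_nonneg _) ?_ hg
  filter_upwards [Filter.eventually_ge_atTop 1] with n hn
  obtain ⟨hq, he⟩ := h n hn
  generalize qn n = q at hq he ⊢
  have hq0 : 0 < q := by linarith
  have hpow : q * (3 / 2 : ℝ) ^ n ≤ q ^ (3 * n) := by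
    calc q * (3 / 2 : ℝ) ^ n ≤ q * q ^ n := by gcongr
      _ = q ^ (n + 1) := by ring
      _ ≤ q ^ (3 * n) := pow_le_pow_right₀ (by linarith) (by omega)
  have habs : (q + 1) * q ^ (3 * n) * |q ^ 3 - q ^ 2 - q - 1| = q ^ 2 := by
    have := congrArg abs he
    rwa [abs_mul, abs_neg, abs_of_pos (by positivity : 0 < (q + 1) * q ^ (3 * n)),
      abs_of_pos (by positivity : 0 < q ^ 2)] at this
  have hP : |q ^ 3 - q ^ 2 - q - 1| ≤ (2 / 3) ^ n := by
    have h1 : (q + 1) * (q * (3 / 2 : ℝ) ^ n) * |q ^ 3 - q ^ 2 - q - 1| ≤ q ^ 2 := by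
      refine le_trans ?_ habs.le
      gcongr
    have h2 : (q + 1) * q * ((3 / 2 : ℝ) ^ n * |q ^ 3 - q ^ 2 - q - 1|) ≤ (q + 1) * q * 1 := by
      nlinarith
    have h3 := le_of_mul_le_mul_left h2 (by positivity)
    rw [show (2 / 3 : ℝ) = (3 / 2)⁻¹ by norm_num, inv_pow, ← one_div, le_div_iff₀ (by positivity)]
    linarith
  -- The slope of `P` between two points beyond `3/2` is at least `1`.
  have hfac : q ^ 3 - q ^ 2 - q - 1 = (q - t) * (q ^ 2 + q * t + t ^ 2 - q - t - 1) := by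
    linear_combination ht
  have hslope : 1 ≤ q ^ 2 + q * t + t ^ 2 - q - t - 1 := by nlinarith
  rw [hfac, abs_mul, abs_of_pos (by linarith : 0 < q ^ 2 + q * t + t ^ 2 - q - t - 1)] at hP
  rw [Real.norm_eq_abs]
  nlinarith [abs_nonneg (q - t)]

/-- Let `q_n ∈ (1,2)` be the base with quasi-greedy expansion of `1` equal to
`(110)^n (10)^∞`. Then each `q_n ∈ 𝒰`, the limit `q* = lim q_n` exists with quasi-greedy
expansion of `1` in base `q*` equal to `(110)^∞`, and `q* ∈ closure 𝒰 \ 𝒰`; in particular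
`1110^∞` is an expansion of `1` in base `q*` distinct from the quasi-greedy one. -/
theorem qn_in_univBases_limit_not (qn : ℕ → ℝ)
    (hqn : ∀ n, 1 ≤ n → 1 < qn n ∧ qn n < 2 ∧ ∀ i, quasiGreedy (qn n) 1 i = pattern n i) :
    (∀ n, 1 ≤ n → qn n ∈ UnivBases) ∧
    ∃ qstar : ℝ, Filter.Tendsto qn Filter.atTop (nhds qstar) ∧
      (∀ i, quasiGreedy qstar 1 i = patternStar i) ∧
      qstar ∈ closure UnivBases \ UnivBases ∧
      IsExpansion qstar (fun i => if i < 3 then 1 else 0) 1 ∧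
      (fun i => if i < 3 then 1 else 0) ≠ quasiGreedy qstar 1 := by
  obtain ⟨t, ha, hb, ht⟩ := exists_tribonacci
  have hU : ∀ n, 1 ≤ n → qn n ∈ UnivBases := fun n hn =>
    mem_univBases hn (hqn n hn).1 (hqn n hn).2.1 (hqn n hn).2.2
  have hlim : Filter.Tendsto qn Filter.atTop (nhds t) := by
    refine tendsto_base ha ht fun n hn => ?_
    obtain ⟨h1, h2, h⟩ := hqn n hn
    obtain ⟨h0, hs, hr⟩ := rem_facts h1 h2 h
    have he := base_equation h1 h0 hs hr
    exact ⟨(base_bounds hn h1 he).1, he⟩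
  have hne : (fun i => if i < 3 then 1 else 0) ≠ quasiGreedy t 1 := by
    intro h
    have := congrFun h 2
    rw [quasiGreedy_star ha hb ht] at this
    simp [patternStar] at this
  have h3 := isExpansion_three_ones (by linarith) ht
  refine ⟨hU, t, hlim, quasiGreedy_star ha hb ht, ⟨?_, ?_⟩, h3, hne⟩
  · exact mem_closure_of_tendsto hlim ((Filter.eventually_ge_atTop 1).mono hU)
  · rintro ⟨h1, hex⟩
    exact hne (hex.unique h3 (isExpansion_quasiGreedy_one h1 hb))
end
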